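/- arXiv:2104.12584 — 2 statements merged into one kernel-verified Lean document; each statement's English description precedes it below -/
import Mathlib

section
/- Let A ⊂ ℤⁿ be a finite set with 0 possibly in A, and let c_ω > 0 for ω ∈ A. Assume there exists φ₀ ∈ ℝⁿ with ⟨φ₀, ω⟩ > 0 for every ω ∈ A∖{0} (the cone generated by A is pointed) and that A∖{0} spans ℝⁿ (the cone is n-dimensional). Set p(x) := Σ_{ω∈A} c_ω x^ω for x ∈ ℝⁿ_{>0}, let C := Σ_{ω∈A} ℝ_{≥0}·ω, let C* := {φ ∈ ℝⁿ : ⟨φ, ω⟩ ≥ 0 for all ω ∈ A}, and let c₀ := c_0 if 0 ∈ A and c₀ := 0 otherwise (the constant term of p). Then for every X in the interior of C: lim_{α→0⁺} αⁿ · ∫_{ℝⁿ_{>0}} e^{−p(x)} · ∏_{i=1}^n x_i^{αX_i−1} dx = e^{−c₀} · ∫_{C*} e^{−⟨φ,X⟩} dφ, where both integrals are Lebesgue integrals. -/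
open MeasureTheory Real

/-!
The substitution `x = exp (-φ / α)` turns `αⁿ ∫ e^{-p(x)} ∏ xᵢ^{αXᵢ - 1} dx` into the integral of
`exp (-∑ cₐ exp (-⟨wₐ, φ⟩ / α)) * exp (-⟨X, φ⟩)` over the whole space. As `α → 0⁺`, the first factor
tends to `e^{-c₀}` inside the dual cone and to `0` outside it, away from the hyperplanes
`⟨wₐ, φ⟩ = 0` with `wₐ ≠ 0`, which are negligible. Since `X` is interior to the cone, it is a
combination `∑ tₐ wₐ` with every `tₐ` strictly positive, and for `α ≤ 1` the inequality
`c e^{-s/α} + t s ≥ t |s| - 2 t² / c` bounds the integrand by `K exp (-∑ tₐ |⟨wₐ, φ⟩|)`. The `wₐ`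
span, so this is at most `K exp (-ε ‖φ‖)` and dominated convergence applies.
-/

open Filter Finset Topology

/-- The generalised Laurent polynomial `∑ₐ cₐ x ^ wₐ` in logarithmic coordinates `ψ = log x`,
where `ℓ a` is the functional `⟨wₐ, ·⟩`. -/
noncomputable def expSum {ι E : Type*} [AddCommGroup E] [Module ℝ E] (A : Finset ι) (c : ι → ℝ)
    (ℓ : ι → Module.Dual ℝ E) (ψ : E) : ℝ :=
  ∑ a ∈ A, c a * exp (ℓ a ψ)

section Cone

theorem mem_hull_image_finset_iff {ι R V : Type*} [Semiring R] [PartialOrder R] [IsOrderedRing R]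
    [AddCommMonoid V] [Module R V] {A : Finset ι} {w : ι → V} {x : V} :
    x ∈ PointedCone.hull R (w '' A) ↔ ∃ t : ι → R, (∀ a, 0 ≤ t a) ∧ x = ∑ a ∈ A, t a • w a := by
  rw [Submodule.mem_span_image_finset_iff_exists_fun']
  constructor
  · rintro ⟨t, rfl⟩
    exact ⟨fun a => t a, fun a => (t a).2, rfl⟩
  · rintro ⟨t, ht, rfl⟩
    exact ⟨fun a => ⟨t a, ht a⟩, rfl⟩

variable {ι V : Type*} [AddCommGroup V] [Module ℝ V] [TopologicalSpace V]
  [IsTopologicalAddGroup V] [ContinuousSMul ℝ V] {A : Finset ι} {w : ι → V} {X : V}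

theorem exists_pos_sum_smul_eq_of_mem_interior_hull
    (hX : X ∈ interior (PointedCone.hull ℝ (w '' A) : Set V)) :
    ∃ t : ι → ℝ, (∀ a, 0 < t a) ∧ ∑ a ∈ A, t a • w a = X := by
  have hline : Tendsto (fun s : ℝ => X - s • ∑ a ∈ A, w a) (𝓝[>] 0) (𝓝 X) :=
    (Continuous.tendsto' (by fun_prop) 0 X (by simp)).mono_left nhdsWithin_le_nhds
  obtain ⟨s, hs_mem, hs⟩ :=
    ((hline.eventually_mem (mem_interior_iff_mem_nhds.1 hX)).and self_mem_nhdsWithin).exists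
  obtain ⟨t, ht, hsum⟩ := mem_hull_image_finset_iff.1 hs_mem
  refine ⟨fun a => t a + s, fun a => add_pos_of_nonneg_of_pos (ht a) hs, ?_⟩
  simp only [add_smul, sum_add_distrib, ← smul_sum]
  exact (sub_eq_iff_eq_add.1 hsum).symm

theorem span_eq_top_of_mem_interior_hull {s : Set V}
    (hX : X ∈ interior (PointedCone.hull ℝ s : Set V)) : Submodule.span ℝ s = ⊤ :=
  Submodule.eq_top_of_nonempty_interior' _
    ⟨X, interior_mono (PointedCone.hull_le_span (R := ℝ) s) hX⟩

end Cone

section Bounds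

variable {ι E : Type*}

theorem mul_abs_sub_le_mul_exp_add_mul {c t s α : ℝ} (hc : 0 < c) (hα : 0 < α) (hα1 : α ≤ 1) :
    t * |s| - 2 * t ^ 2 / c ≤ c * exp (-(α⁻¹ * s)) + t * s := by
  rcases le_total 0 s with hs | hs
  · have : 0 ≤ 2 * t ^ 2 / c := by positivity
    rw [abs_of_nonneg hs]
    linarith [mul_pos hc (exp_pos (-(α⁻¹ * s)))]
  · have hscale : -s ≤ -(α⁻¹ * s) := by
      nlinarith [(one_le_inv₀ hα).2 hα1]
    have hquad : s ^ 2 / 2 ≤ exp (-(α⁻¹ * s)) := by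
      have := quadratic_le_exp_of_nonneg (neg_nonneg.2 hs)
      have := exp_le_exp.2 hscale
      nlinarith
    -- The error term `2 t² / c` completes the square left by `e^u ≥ u² / 2` for `u ≥ 0`.
    have hsquare : c * (s ^ 2 / 2) + 2 * t * s + 2 * t ^ 2 / c = (c * s + 2 * t) ^ 2 / (2 * c) := by
      field_simp
      ring
    have : 0 ≤ (c * s + 2 * t) ^ 2 / (2 * c) := by positivity
    rw [abs_of_nonpos hs]
    linarith [mul_le_mul_of_nonneg_left hquad hc.le]

theorem sum_mul_abs_sub_le_expSum_add [AddCommGroup E] [Module ℝ E] {A : Finset ι} {c t : ι → ℝ}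
    {ℓ : ι → Module.Dual ℝ E} {α : ℝ} (hc : ∀ a ∈ A, 0 < c a)
    (hα : 0 < α) (hα1 : α ≤ 1) (φ : E) :
    ∑ a ∈ A, t a * |ℓ a φ| - ∑ a ∈ A, 2 * t a ^ 2 / c a ≤
      expSum A c ℓ (-(α⁻¹ • φ)) + (∑ a ∈ A, t a • ℓ a) φ := by
  simp only [expSum, LinearMap.sum_apply, LinearMap.smul_apply, map_neg, map_smul, smul_eq_mul,
    ← sum_add_distrib, ← sum_sub_distrib]
  exact sum_le_sum fun a ha => mul_abs_sub_le_mul_exp_add_mul (hc a ha) hα hα1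

variable [NormedAddCommGroup E] [NormedSpace ℝ E] [FiniteDimensional ℝ E]

theorem exists_pos_mul_norm_le_sum_mul_abs {A : Finset ι} {t : ι → ℝ} {ℓ : ι → Module.Dual ℝ E}
    (ht : ∀ a ∈ A, 0 < t a) (hspan : Submodule.span ℝ (ℓ '' A) = ⊤) :
    ∃ ε > 0, ∀ φ, ε * ‖φ‖ ≤ ∑ a ∈ A, t a * |ℓ a φ| := by
  let L : E →ₗ[ℝ] A → ℝ := LinearMap.pi fun a => t a • ℓ a
  have hinj : Function.Injective L := by
    refine (injective_iff_map_eq_zero L).2 fun φ hφ => ?_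
    have hspan_le : Submodule.span ℝ (ℓ '' A) ≤ LinearMap.ker (Module.Dual.eval ℝ E φ) := by
      rw [Submodule.span_le]
      rintro _ ⟨a, ha, rfl⟩
      have : t a * ℓ a φ = 0 := congrFun hφ ⟨a, ha⟩
      simpa [(ht a ha).ne'] using this
    refine (Module.forall_dual_apply_eq_zero_iff ℝ φ).1 fun f => ?_
    exact hspan_le (hspan ▸ Submodule.mem_top : f ∈ _)
  obtain ⟨K, hK, hL⟩ := L.injective_iff_antilipschitz.1 hinj
  refine ⟨(K : ℝ)⁻¹, by positivity, fun φ => (inv_mul_le_iff₀ (by positivity)).2 ?_⟩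
  have hnorm_L : ‖L φ‖ ≤ ∑ a ∈ A, t a * |ℓ a φ| := by
    rw [← sum_coe_sort A]
    have hterm (a : A) : ‖L φ a‖ = t a * |ℓ a φ| := by
      simp [L, abs_of_pos (ht a a.2)]
    simp only [← hterm]
    exact (pi_norm_le_iff_of_nonneg (sum_nonneg fun _ _ => norm_nonneg _)).2 fun a =>
      single_le_sum (f := fun a => ‖L φ a‖) (fun _ _ => norm_nonneg _) (mem_univ a)
  exact (hL.le_mul_norm (map_zero L) φ).trans (by gcongr)

theorem integrable_exp_neg_mul_norm [MeasurableSpace E] [BorelSpace E] (μ : Measure E)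
    [μ.IsAddHaarMeasure] {ε : ℝ} (hε : 0 < ε) : Integrable (fun φ => exp (-(ε * ‖φ‖))) μ := by
  cases subsingleton_or_nontrivial E
  · exact Continuous.integrable_of_hasCompactSupport (by fun_prop) (.of_compactSpace _)
  · rw [integrable_fun_norm_addHaar μ (f := fun r => exp (-(ε * r)))]
    simpa using integrableOn_rpow_mul_exp_neg_mul_rpow
      (neg_one_lt_zero.trans_le (Nat.cast_nonneg (Module.finrank ℝ E - 1))) one_pos hε

end Bounds

section Pointwise

variable {ι E : Type*} [AddCommGroup E] [Module ℝ E] {A : Finset ι} {c : ι → ℝ}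
  {ℓ : ι → Module.Dual ℝ E} {φ : E}

theorem tendsto_expSum_neg_inv_smul (hφ : ∀ a ∈ A, 0 ≤ ℓ a φ) :
    Tendsto (fun α : ℝ => expSum A c ℓ (-(α⁻¹ • φ))) (𝓝[>] 0)
      (𝓝 (∑ a ∈ A with ℓ a φ = 0, c a)) := by
  simp only [expSum, map_neg, map_smul, smul_eq_mul]
  rw [sum_filter]
  refine tendsto_finsetSum A fun a ha => ?_
  split_ifs with h
  · simp [h]
  · have : Tendsto (fun α : ℝ => -(α⁻¹ * ℓ a φ)) (𝓝[>] 0) atBot :=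
      tendsto_neg_atTop_atBot.comp
        (tendsto_inv_nhdsGT_zero.atTop_mul_const ((hφ a ha).lt_of_ne' h))
    simpa using (tendsto_exp_atBot.comp this).const_mul (c a)

theorem tendsto_expSum_neg_inv_smul_atTop (hc : ∀ a ∈ A, 0 < c a) (hφ : ∃ a ∈ A, ℓ a φ < 0) :
    Tendsto (fun α : ℝ => expSum A c ℓ (-(α⁻¹ • φ))) (𝓝[>] 0) atTop := by
  obtain ⟨a, ha, hneg⟩ := hφ
  have hterm : Tendsto (fun α : ℝ => c a * exp (ℓ a (-(α⁻¹ • φ)))) (𝓝[>] 0) atTop := by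
    simp only [map_neg, map_smul, smul_eq_mul]
    exact (tendsto_exp_atTop.comp <| tendsto_neg_atBot_atTop.comp <|
      tendsto_inv_nhdsGT_zero.atTop_mul_const_of_neg hneg).const_mul_atTop (hc a ha)
  refine tendsto_atTop_mono (fun α => ?_) hterm
  exact single_le_sum (f := fun a => c a * exp (ℓ a (-(α⁻¹ • φ))))
    (fun b hb => mul_nonneg (hc b hb).le (exp_pos _).le) ha

end Pointwise

section Limit

variable {ι E : Type*} [NormedAddCommGroup E] [NormedSpace ℝ E] [FiniteDimensional ℝ E]

theorem continuous_expSum (A : Finset ι) (c : ι → ℝ) (ℓ : ι → Module.Dual ℝ E) :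
    Continuous (expSum A c ℓ) :=
  continuous_finsetSum A fun a _ =>
    continuous_const.mul (continuous_exp.comp (ℓ a).continuous_of_finiteDimensional)

variable [MeasurableSpace E] [BorelSpace E]

theorem measurableSet_setOf_forall_nonneg (A : Finset ι) (ℓ : ι → Module.Dual ℝ E) :
    MeasurableSet {φ | ∀ a ∈ A, 0 ≤ ℓ a φ} := by
  simp only [Set.ofPred_forall]
  exact (isClosed_biInter fun a _ => isClosed_le continuous_const
    (ℓ a).continuous_of_finiteDimensional).measurableSet

variable (μ : Measure E) [μ.IsAddHaarMeasure]

theorem ae_apply_eq_zero_iff_eq_zero (f : Module.Dual ℝ E) : ∀ᵐ φ ∂μ, f φ = 0 ↔ f = 0 := by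
  by_cases hf : f = 0
  · simp [hf]
  · have hker : LinearMap.ker f ≠ ⊤ := fun h => hf (LinearMap.ker_eq_top.1 h)
    filter_upwards [measure_eq_zero_iff_ae_notMem.1 (Measure.addHaar_submodule μ _ hker)] with φ hφ
    simpa [hf] using hφ

open Classical in
theorem ae_tendsto_exp_neg_expSum_neg_inv_smul {A : Finset ι} {c : ι → ℝ}
    {ℓ : ι → Module.Dual ℝ E} (hc : ∀ a ∈ A, 0 < c a) :
    ∀ᵐ φ ∂μ, Tendsto (fun α : ℝ => exp (-expSum A c ℓ (-(α⁻¹ • φ)))) (𝓝[>] 0)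
      (𝓝 ({φ | ∀ a ∈ A, 0 ≤ ℓ a φ}.indicator
        (fun _ => exp (-∑ a ∈ A with ℓ a = 0, c a)) φ)) := by
  filter_upwards [(Finset.eventually_all A).2 fun a _ => ae_apply_eq_zero_iff_eq_zero μ (ℓ a)]
    with φ hwalls
  by_cases hφ : ∀ a ∈ A, 0 ≤ ℓ a φ
  · rw [Set.indicator_of_mem (Set.mem_ofPred.2 hφ), ← filter_congr hwalls]
    exact (tendsto_expSum_neg_inv_smul hφ).neg.rexp
  · rw [Set.indicator_of_notMem (mt Set.mem_ofPred.1 hφ)]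
    push Not at hφ
    exact tendsto_exp_neg_atTop_nhds_zero.comp (tendsto_expSum_neg_inv_smul_atTop hc hφ)

open Classical in
theorem tendsto_integral_exp_neg_expSum {A : Finset ι} {c t : ι → ℝ} {ℓ : ι → Module.Dual ℝ E}
    (hc : ∀ a ∈ A, 0 < c a) (ht : ∀ a ∈ A, 0 < t a) (hspan : Submodule.span ℝ (ℓ '' A) = ⊤)
    {X : Module.Dual ℝ E} (hX : ∑ a ∈ A, t a • ℓ a = X) :
    Tendsto (fun α : ℝ => ∫ φ, exp (-expSum A c ℓ (-(α⁻¹ • φ))) * exp (-X φ) ∂μ) (𝓝[>] 0)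
      (𝓝 (exp (-∑ a ∈ A with ℓ a = 0, c a) *
        ∫ φ in {φ | ∀ a ∈ A, 0 ≤ ℓ a φ}, exp (-X φ) ∂μ)) := by
  obtain ⟨ε, hε, hnorm⟩ := exists_pos_mul_norm_le_sum_mul_abs ht hspan
  have hcont (α : ℝ) : Continuous fun φ => exp (-expSum A c ℓ (-(α⁻¹ • φ))) * exp (-X φ) := by
    have := continuous_expSum A c ℓ
    have := X.continuous_of_finiteDimensional
    fun_prop
  have hbound : ∀ α ∈ Set.Ioc (0 : ℝ) 1, ∀ φ, ‖exp (-expSum A c ℓ (-(α⁻¹ • φ))) * exp (-X φ)‖ ≤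
      exp (∑ a ∈ A, 2 * t a ^ 2 / c a) * exp (-(ε * ‖φ‖)) := by
    rintro α ⟨hα, hα1⟩ φ
    have := sum_mul_abs_sub_le_expSum_add (t := t) (ℓ := ℓ) hc hα hα1 φ
    rw [norm_of_nonneg (by positivity), ← exp_add, ← exp_add, exp_le_exp]
    linarith [hnorm φ, hX ▸ this]
  have hlim : ∀ᵐ φ ∂μ, Tendsto (fun α : ℝ => exp (-expSum A c ℓ (-(α⁻¹ • φ))) * exp (-X φ))
      (𝓝[>] 0) (𝓝 ({φ | ∀ a ∈ A, 0 ≤ ℓ a φ}.indicator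
        (fun φ => exp (-∑ a ∈ A with ℓ a = 0, c a) * exp (-X φ)) φ)) := by
    filter_upwards [ae_tendsto_exp_neg_expSum_neg_inv_smul μ hc] with φ hφ
    rw [Set.indicator_mul_left]
    exact hφ.mul_const _
  rw [← integral_const_mul, ← integral_indicator (measurableSet_setOf_forall_nonneg A ℓ)]
  exact tendsto_integral_filter_of_dominated_convergence _
    (.of_forall fun α => (hcont α).aestronglyMeasurable)
    (eventually_of_mem (Ioc_mem_nhdsGT one_pos) fun α hα => .of_forall (hbound α hα))
    ((integrable_exp_neg_mul_norm μ hε).const_mul _) hlim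

end Limit

section Orthant

variable {κ : Type*} [Fintype κ]

theorem setIntegral_univ_pi_Ioi_zero_eq_integral_exp {F : Type*} [NormedAddCommGroup F]
    [NormedSpace ℝ F] (g : (κ → ℝ) → F) :
    ∫ x in Set.univ.pi fun _ : κ => Set.Ioi (0 : ℝ), g x =
      ∫ ψ : κ → ℝ, exp (∑ i, ψ i) • g fun i => exp (ψ i) := by
  let f (ψ : κ → ℝ) (i : κ) : ℝ := exp (ψ i)
  let f' (ψ : κ → ℝ) : (κ → ℝ) →L[ℝ] κ → ℝ :=
    .pi fun i => (ContinuousLinearMap.toSpanSingleton ℝ (exp (ψ i))).comp (.proj i)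
  have hderiv : ∀ ψ ∈ Set.univ, HasFDerivWithinAt f (f' ψ) Set.univ ψ := fun ψ _ =>
    (hasFDerivAt_pi.2 fun i =>
      (hasDerivAt_exp (ψ i)).hasFDerivAt.comp (f := fun φ : κ → ℝ => φ i) ψ
        (hasFDerivAt_apply i ψ)).hasFDerivWithinAt
  have hinj : Set.InjOn f Set.univ := fun φ _ ψ _ h => funext fun i => exp_injective (congrFun h i)
  have himage : f '' Set.univ = Set.univ.pi fun _ => Set.Ioi 0 := by
    rw [← Set.pi_univ Set.univ]
    exact (Set.piMap_image_univ_pi (fun _ : κ => exp) fun _ => Set.univ).trans (by simp)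
  have hdet (ψ : κ → ℝ) : |(f' ψ).det| = exp (∑ i, ψ i) := by
    simp [f', ContinuousLinearMap.det_pi, exp_sum, abs_prod]
  rw [← himage, integral_image_eq_integral_abs_det_fderiv_smul volume .univ hderiv hinj,
    setIntegral_univ]
  simp only [hdet, f]

theorem prod_exp_rpow (ψ v : κ → ℝ) : ∏ i, exp (ψ i) ^ v i = exp (v ⬝ᵥ ψ) := by
  simp only [← exp_mul, ← exp_sum, dotProduct, mul_comm]

theorem pow_card_mul_setIntegral_eq_integral_exp_neg_expSum {ι : Type*} (A : Finset ι) (c : ι → ℝ)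
    [DecidableEq κ] (w : ι → κ → ℝ) (X : κ → ℝ) {α : ℝ} (hα : 0 < α) :
    α ^ Fintype.card κ * ∫ x in Set.univ.pi fun _ : κ => Set.Ioi (0 : ℝ),
        exp (-∑ a ∈ A, c a * ∏ i, x i ^ w a i) * ∏ i, x i ^ (α * X i - 1) =
      ∫ φ, exp (-expSum A c (fun a => dotProductEquiv ℝ κ (w a)) (-(α⁻¹ • φ))) *
        exp (-dotProductEquiv ℝ κ X φ) := by
  let G (ψ : κ → ℝ) : ℝ :=
    exp (-expSum A c (fun a => dotProductEquiv ℝ κ (w a)) ψ) * exp (α * dotProductEquiv ℝ κ X ψ)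
  have hlog : ∫ x in Set.univ.pi fun _ : κ => Set.Ioi (0 : ℝ),
      exp (-∑ a ∈ A, c a * ∏ i, x i ^ w a i) * ∏ i, x i ^ (α * X i - 1) = ∫ ψ, G ψ := by
    rw [setIntegral_univ_pi_Ioi_zero_eq_integral_exp]
    congr with ψ
    have hexp : exp (∑ i, ψ i) * exp ((fun i => α * X i - 1) ⬝ᵥ ψ) = exp (α * X ⬝ᵥ ψ) := by
      rw [← exp_add]
      simp only [dotProduct, sub_mul, one_mul, sum_sub_distrib, mul_assoc, ← mul_sum]
      ring_nf
    simp only [prod_exp_rpow, G, expSum, dotProductEquiv_apply_apply, smul_eq_mul, ← hexp]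
    ring
  have hscale := Measure.integral_comp_smul volume G (-α⁻¹)
  have hjac : |((-α⁻¹) ^ Module.finrank ℝ (κ → ℝ))⁻¹| = α ^ Fintype.card κ := by
    simp [abs_of_pos hα]
  rw [hlog, ← hjac, ← smul_eq_mul, ← hscale]
  simp only [G, neg_smul, map_neg, map_smul, smul_eq_mul, mul_neg, mul_inv_cancel_left₀ hα.ne']

open Classical in
theorem stmt_1_general {ι : Type*} (A : Finset ι) (c : ι → ℝ) (hc : ∀ a ∈ A, 0 < c a)
    (w : ι → κ → ℝ) (X : κ → ℝ) (hX : X ∈ interior (PointedCone.hull ℝ (w '' A) : Set (κ → ℝ))) :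
    Tendsto
      (fun α : ℝ => α ^ Fintype.card κ *
        ∫ x in Set.univ.pi fun _ : κ => Set.Ioi (0 : ℝ),
          exp (-∑ a ∈ A, c a * ∏ i, x i ^ w a i) * ∏ i, x i ^ (α * X i - 1))
      (𝓝[>] 0)
      (𝓝 (exp (-∑ a ∈ A with w a = 0, c a) *
        ∫ φ in {φ | ∀ a ∈ A, 0 ≤ w a ⬝ᵥ φ}, exp (-(X ⬝ᵥ φ)))) := by
  obtain ⟨t, ht, rfl⟩ := exists_pos_sum_smul_eq_of_mem_interior_hull hX
  let e := dotProductEquiv ℝ κ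
  have hspan : Submodule.span ℝ ((fun a => e (w a)) '' A) = ⊤ := by
    rw [← Function.comp_def e w, Set.image_comp, ← LinearEquiv.coe_coe, Submodule.span_image,
      span_eq_top_of_mem_interior_hull hX, Submodule.map_top, LinearEquiv.range]
  have hlim := tendsto_integral_exp_neg_expSum volume hc (fun a _ => ht a) hspan
    (X := e (∑ a ∈ A, t a • w a)) (by simp)
  simp only [e, EmbeddingLike.map_eq_zero_iff] at hlim
  exact hlim.congr' <| eventually_mem_nhdsWithin.mono fun α hα =>
    (pow_card_mul_setIntegral_eq_integral_exp_neg_expSum A c w _ hα).symm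

end Orthant

/-- For a Laurent polynomial `p` with positive coefficients whose exponent cone is
pointed and `n`-dimensional, and `X` in the interior of that cone,
`lim_{α→0⁺} αⁿ ∫_{ℝⁿ_{>0}} e^{−p(x)} ∏ᵢ xᵢ^{αXᵢ−1} dx = e^{−c₀} ∫_{C*} e^{−⟨φ,X⟩} dφ`. -/
theorem stmt_1 (n : ℕ) (A : Finset (Fin n → ℤ)) (c : (Fin n → ℤ) → ℝ)
    (hc : ∀ ω ∈ A, 0 < c ω)
    (hpointed : ∃ φ₀ : Fin n → ℝ, ∀ ω ∈ A, ω ≠ 0 → 0 < ∑ i, φ₀ i * (ω i : ℝ))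
    (hspan : Submodule.span ℝ
        ((fun ω : Fin n → ℤ => fun i => (ω i : ℝ)) ''
          ((A : Set (Fin n → ℤ)) \ {0})) = ⊤)
    (p : (Fin n → ℝ) → ℝ)
    (hp : ∀ x, p x = ∑ ω ∈ A, c ω * ∏ i, x i ^ (ω i))
    (C : Set (Fin n → ℝ))
    (hC : C = {y | ∃ t : (Fin n → ℤ) → ℝ, (∀ ω, 0 ≤ t ω) ∧
        y = ∑ ω ∈ A, t ω • fun i => (ω i : ℝ)})
    (Cstar : Set (Fin n → ℝ))
    (hCstar : Cstar = {φ | ∀ ω ∈ A, 0 ≤ ∑ i, φ i * (ω i : ℝ)})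
    (c₀ : ℝ) (hc₀ : c₀ = if (0 : Fin n → ℤ) ∈ A then c 0 else 0)
    (X : Fin n → ℝ) (hX : X ∈ interior C) :
    Filter.Tendsto
      (fun α : ℝ => α ^ n *
        ∫ x in Set.univ.pi fun _ : Fin n => Set.Ioi (0 : ℝ),
          Real.exp (-p x) * ∏ i, x i ^ (α * X i - 1))
      (nhdsWithin 0 (Set.Ioi 0))
      (nhds (Real.exp (-c₀) * ∫ φ in Cstar, Real.exp (-∑ i, φ i * X i))) := by
  have hcone : C = PointedCone.hull ℝ ((fun (ω : Fin n → ℤ) i => (ω i : ℝ)) '' A) :=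
    hC.trans (Set.ext fun _ => mem_hull_image_finset_iff.symm)
  have hzero (ω : Fin n → ℤ) : (fun i => (ω i : ℝ)) = 0 ↔ ω = 0 := by simp [funext_iff]
  simpa [hp, hCstar, hc₀, hzero, dotProduct, mul_comm, Finset.sum_filter] using
    stmt_1_general A c hc (fun ω i => (ω i : ℝ)) X (hcone ▸ hX)
end

section
/- Let q₁,…,q_e be Laurent polynomials in n variables with positive coefficients and exponent sets A₁,…,A_e ⊂ ℤⁿ, let v₁,…,v_e > 0, set P := Σ_{j=1}^e v_j · conv(A_j), assumed n-dimensional, and let ⊂ ℝ^{e+n} be the Cayley configuration with cone Cone(Â). Let T be a finite collection of subsets σ ⊆ each consisting of n+e linearly independent vectors (write A_σ for the (n+e)×(n+e) matrix whose columns are the elements of σ), such that Cone(Â) = ⋃_{σ∈T} Cone(σ) and for distinct σ, σ′ ∈ T the intersection Cone(σ) ∩ Cone(σ′) has Lebesgue measure zero in ℝ^{e+n} (a triangulation of Cone(Â)). Suppose u lies in the interior of P and X := (v,u) satisfies that every coordinate of A_σ⁻¹X is nonzero for every σ ∈ T. Then n! · vol((P−u)^∘) = (v₁⋯v_e) ·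 Σ_{σ∈T} 1/(|det A_σ| · ∏_{i=1}^{n+e} (A_σ⁻¹X)_i), where (P−u)^∘ := {ψ ∈ ℝⁿ : ⟨ψ, p−u⟩ ≥ −1 for all p ∈ P} and vol is Lebesgue measure on ℝⁿ. -/
open MeasureTheory Real Pointwise Matrix

open Filter Set Topology
open scoped Finset

/-!
Both sides evaluate, up to the factor `v₁ ⋯ v_e`, the Laplace integral `∫ exp (-⟨X, φ⟩)` over the
dual of the Cayley cone. Integrating first over the `e` coordinates paired with `v` leaves
`∫ exp (-g)` for a gauge `g` whose unit sublevel set is the polar dual of `P` at `u`. On the other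
hand, slightly pushing points towards `X` turns the dissection into a partition of the cone into
half-open simplicial cones, hence writes its indicator as a signed sum of indicators of closed
cones. By Euler characteristics of hyperplane slices such linear relations pass to dual cones.
The dual of a cone containing a line is a null set, so almost everywhere only one simplicial cone
per member of `T` survives: the one whose generators are reversed so that they add up, with
positive weights, to `X`. The integral over its dual is elementary.
-/

section Euler

variable {κ G : Type*} [AddCommGroup G] {s : Finset κ} {c : κ → G}

theorem eventually_nhdsGT_mem_iff {α : Type*} [ConditionallyCompleteLinearOrder α]
    [TopologicalSpace α] [OrderTopology α] {I : Set α} (hI : IsCompact I) (hconn : I.OrdConnected)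
    (t : α) : ∀ᶠ t' in 𝓝[>] t, t' ∈ I ↔ t ∈ I ∧ sSup I ≠ t := by
  by_cases ht : t ∈ I
  · have hsup := hI.sSup_mem ⟨t, ht⟩
    have hle : ∀ x ∈ I, x ≤ sSup I := fun x hx ↦ le_csSup hI.bddAbove hx
    rcases (hle t ht).lt_or_eq with hlt | heq
    · filter_upwards [Ioo_mem_nhdsGT hlt] with t' ht'
      exact iff_of_true (hconn.out ht hsup ⟨ht'.1.le, ht'.2.le⟩) ⟨ht, hlt.ne'⟩
    · filter_upwards [self_mem_nhdsWithin] with t' ht'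
      exact iff_of_false (fun h ↦ ((hle t' h).trans heq.ge).not_gt ht') fun h ↦ h.2 heq.symm
  · filter_upwards [nhdsWithin_le_nhds (hI.isClosed.isOpen_compl.mem_nhds ht)] with t' ht'
    exact iff_of_false ht' fun h ↦ ht h.1

open scoped Classical in
/- Passing from `t` to a slightly larger `t'` loses exactly the sets whose supremum is `t`; summing
these losses over all suprema counts every nonempty set once. -/
theorem sum_filter_nonempty_eq_zero_of_ordConnected {α : Type*}
    [ConditionallyCompleteLinearOrder α] [TopologicalSpace α] [OrderTopology α] [DenselyOrdered α]
    [NoMaxOrder α] {I : κ → Set α} (hI : ∀ i ∈ s, IsCompact (I i))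
    (hconn : ∀ i ∈ s, (I i).OrdConnected) (h : ∀ t, ∑ i ∈ s with t ∈ I i, c i = 0) :
    ∑ i ∈ s with (I i).Nonempty, c i = 0 := by
  have hjump (t : α) : ∑ i ∈ s with t ∈ I i ∧ sSup (I i) = t, c i = 0 := by
    have hev : ∀ᶠ t' in 𝓝[>] t, ∀ i ∈ s, t' ∈ I i ↔ t ∈ I i ∧ sSup (I i) ≠ t :=
      (eventually_all_finset s).2 fun i hi ↦ eventually_nhdsGT_mem_iff (hI i hi) (hconn i hi) t
    obtain ⟨t', ht'⟩ := hev.exists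
    have hsplit := Finset.sum_filter_add_sum_filter_not {i ∈ s | t ∈ I i} (fun i ↦ sSup (I i) = t) c
    rwa [Finset.filter_filter, Finset.filter_filter, h, ← Finset.filter_congr ht', h,
      add_zero] at hsplit
  rw [← Finset.sum_fiberwise_of_maps_to (t := s.image fun i ↦ sSup (I i))
    fun i hi ↦ Finset.mem_image_of_mem _ (Finset.mem_filter.1 hi).1]
  refine Finset.sum_eq_zero fun t _ ↦ (hjump t).symm ▸ ?_
  rw [Finset.filter_filter]
  refine Finset.sum_congr (Finset.filter_congr fun i hi ↦ and_congr_left fun ht ↦ ?_) fun _ _ ↦ rfl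
  exact ⟨fun hne ↦ ht ▸ (hI i hi).sSup_mem hne, fun h ↦ ⟨t, h⟩⟩

open scoped Classical in
theorem sum_filter_nonempty_eq_zero_of_slices {E : Type*} [AddCommGroup E] [Module ℝ E]
    [TopologicalSpace E] {K : κ → Set E} (f : E →L[ℝ] ℝ) (hK : ∀ i ∈ s, IsCompact (K i))
    (hconv : ∀ i ∈ s, Convex ℝ (K i))
    (h : ∀ t, ∑ i ∈ s with (K i ∩ {x | f x = t}).Nonempty, c i = 0) :
    ∑ i ∈ s with (K i).Nonempty, c i = 0 := by
  simpa only [image_nonempty] using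
    sum_filter_nonempty_eq_zero_of_ordConnected (I := fun i ↦ f '' K i)
      (fun i hi ↦ (hK i hi).image f.continuous)
      (fun i hi ↦ ((hconv i hi).linear_image f.toLinearMap).ordConnected) h

open scoped Classical in
theorem sum_filter_nonempty_eq_zero_of_fibers {E : Type*} [AddCommGroup E] [Module ℝ E]
    [TopologicalSpace E] {d : ℕ} (f : Fin d → E →L[ℝ] ℝ) {K : κ → Set E}
    (hK : ∀ i ∈ s, IsCompact (K i)) (hconv : ∀ i ∈ s, Convex ℝ (K i))
    (h : ∀ z : Fin d → ℝ, ∑ i ∈ s with (K i ∩ {x | ∀ k, f k x = z k}).Nonempty, c i = 0) :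
    ∑ i ∈ s with (K i).Nonempty, c i = 0 := by
  induction d generalizing K with
  | zero => simpa using h 0
  | succ d ih =>
    refine sum_filter_nonempty_eq_zero_of_slices (f 0) hK hconv fun t ↦ ?_
    refine ih (fun k ↦ f k.succ)
      (fun i hi ↦ (hK i hi).inter_right (isClosed_eq (f 0).continuous continuous_const))
      (fun i hi ↦ (hconv i hi).inter (convex_hyperplane (f 0).isLinear t)) fun z ↦ ?_
    simpa only [Fin.forall_fin_succ, Fin.cons_zero, Fin.cons_succ, ofPred_and, inter_assoc]
      using h (Fin.cons t z)

open scoped Classical in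
/-- The Euler characteristic, which is `1` on every nonempty compact convex set, is well defined on
linear combinations of indicators of such sets. -/
theorem sum_filter_nonempty_eq_zero {E : Type*} [AddCommGroup E] [Module ℝ E] [TopologicalSpace E]
    [IsTopologicalAddGroup E] [ContinuousSMul ℝ E] [T2Space E] [FiniteDimensional ℝ E]
    {K : κ → Set E} (hK : ∀ i ∈ s, IsCompact (K i)) (hconv : ∀ i ∈ s, Convex ℝ (K i))
    (h : ∀ x, ∑ i ∈ s with x ∈ K i, c i = 0) : ∑ i ∈ s with (K i).Nonempty, c i = 0 := by
  let b := Module.finBasis ℝ E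
  refine sum_filter_nonempty_eq_zero_of_fibers (fun k ↦ (b.coord k).toContinuousLinearMap) hK hconv
    fun z ↦ ?_
  have hfiber : {x | ∀ k, b.coord k x = z k} = {b.equivFun.symm z} := by
    ext x
    rw [mem_singleton_iff, LinearEquiv.eq_symm_apply, funext_iff]
    rfl
  simp only [LinearMap.coe_toContinuousLinearMap', hfiber, inter_singleton_nonempty]
  exact h _

end Euler

section Duality

variable {κ G E F : Type*} [AddCommGroup G] {s : Finset κ} {c : κ → G} [NormedAddCommGroup E]
  [NormedSpace ℝ E] [FiniteDimensional ℝ E] [AddCommGroup F] [Module ℝ F] {p : E →ₗ[ℝ] F →ₗ[ℝ] ℝ}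

theorem mem_dual_iff_not_nonempty_slice {E F : Type*} [AddCommGroup E] [Module ℝ E]
    [AddCommGroup F] [Module ℝ F] {p : E →ₗ[ℝ] F →ₗ[ℝ] ℝ} {K : PointedCone ℝ E} {φ : F} :
    φ ∈ PointedCone.dual p K ↔ ¬((K : Set E) ∩ {x | p x φ = -1}).Nonempty := by
  constructor
  · rintro hφ ⟨x, hx, hx1 : p x φ = -1⟩
    linarith [hφ hx]
  · refine fun h x hx ↦ not_lt.1 fun hneg ↦ h ⟨(-(p x φ))⁻¹ • x, K.smul_mem ?_ hx, ?_⟩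
    · exact inv_nonneg.2 (neg_nonneg.2 hneg.le)
    · simp [inv_neg, inv_mul_cancel₀ hneg.ne]

theorem eventually_nonempty_inter_closedBall_iff {E : Type*} [SeminormedAddCommGroup E]
    (S : Set E) :
    ∀ᶠ r in atTop, (S ∩ Metric.closedBall 0 r).Nonempty ↔ S.Nonempty := by
  rcases S.eq_empty_or_nonempty with rfl | ⟨x, hx⟩
  · simp
  · filter_upwards [eventually_ge_atTop ‖x‖] with r hr
    exact iff_of_true ⟨x, hx, by simpa using hr⟩ ⟨x, hx⟩

open scoped Classical in
/- `φ` is outside the dual of `K` iff `K` meets the hyperplane `φ = -1`, so the claim compares the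
Euler characteristics of the cones with those of their (truncated) slices. -/
theorem sum_filter_mem_dual_eq_zero {K : κ → PointedCone ℝ E}
    (hK : ∀ i ∈ s, IsClosed (K i : Set E)) (h : ∀ x, ∑ i ∈ s with x ∈ K i, c i = 0) (φ : F) :
    ∑ i ∈ s with φ ∈ PointedCone.dual p (K i), c i = 0 := by
  obtain ⟨r, hr⟩ := ((eventually_all_finset s).2 fun i _ ↦
    eventually_nonempty_inter_closedBall_iff ((K i : Set E) ∩ {x | p x φ = -1})).exists
  have hclosed : IsClosed {x | p x φ = -1} :=
    isClosed_eq (p.flip φ).continuous_of_finiteDimensional continuous_const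
  have hslices : ∑ i ∈ s with ((K i : Set E) ∩ {x | p x φ = -1}).Nonempty, c i = 0 := by
    rw [← Finset.filter_congr hr]
    refine sum_filter_nonempty_eq_zero
      (fun i hi ↦ (isCompact_closedBall 0 r).inter_left ((hK i hi).inter hclosed))
      (fun i _ ↦ ((K i).convex.inter (convex_hyperplane (p.flip φ).isLinear _)).inter
        (convex_closedBall 0 r)) fun x ↦ ?_
    by_cases hx : p x φ = -1 ∧ x ∈ Metric.closedBall 0 r
    · simpa [hx.1, mem_closedBall_zero_iff.1 hx.2] using h x
    · rw [Finset.sum_filter]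
      exact Finset.sum_eq_zero fun i _ ↦ if_neg fun hi ↦ hx ⟨hi.1.2, hi.2⟩
  have htotal : ∑ i ∈ s, c i = 0 := by simpa using h 0
  simpa only [mem_dual_iff_not_nonempty_slice, htotal, hslices, zero_add] using
    Finset.sum_filter_add_sum_filter_not s
      (fun i ↦ ((K i : Set E) ∩ {x | p x φ = -1}).Nonempty) c

open scoped Classical in
theorem sum_filter_mem_dual_eq_ite {K : κ → PointedCone ℝ E} {C : PointedCone ℝ E} {g : G}
    (hK : ∀ i ∈ s, IsClosed (K i : Set E)) (hC : IsClosed (C : Set E))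
    (h : ∀ x, ∑ i ∈ s with x ∈ K i, c i = if x ∈ C then g else 0) (φ : F) :
    ∑ i ∈ s with φ ∈ PointedCone.dual p (K i), c i =
      if φ ∈ PointedCone.dual p (C : Set E) then g else 0 := by
  have hinsert (q : Option κ → Prop) : ∑ i ∈ s.insertNone with q i, i.elim (-g) c = 0 ↔
      ∑ i ∈ s with q (some i), c i = if q none then g else 0 := by
    have hneg : (if q none then -g else 0) = -(if q none then g else 0) := by split_ifs <;> simp
    rw [Finset.sum_filter, Finset.sum_filter, Finset.sum_insertNone, Option.elim_none, hneg,
      neg_add_eq_zero, eq_comm]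
    rfl
  let K' (i : Option κ) : PointedCone ℝ E := i.elim C K
  have hdual := sum_filter_mem_dual_eq_zero (p := p) (K := K')
    (Finset.forall_mem_insertNone.2 ⟨hC, hK⟩) (fun x ↦ (hinsert (x ∈ K' ·)).2 (h x)) φ
  exact (hinsert fun i ↦ φ ∈ PointedCone.dual p (K' i)).1 hdual

end Duality

section SimplicialCone

variable {ι : Type*} [Fintype ι]

/-- The dual cone of a subset of `ℝ^ι`, for the pairing given by the dot product. -/
abbrev dualCone (s : Set (ι → ℝ)) : PointedCone ℝ (ι → ℝ) :=
  PointedCone.dual (dotProductBilin ℝ ℝ) s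

theorem isClosed_dualCone (s : Set (ι → ℝ)) : IsClosed (dualCone s : Set (ι → ℝ)) :=
  PointedCone.isClosed_dual fun _ ↦ LinearMap.continuous_of_finiteDimensional _

/-- The cone spanned by the columns of a square matrix. -/
def columnCone (M : Matrix ι ι ℝ) : PointedCone ℝ (ι → ℝ) :=
  PointedCone.hull ℝ (range M.col)

theorem mem_columnCone_iff_exists {M : Matrix ι ι ℝ} {y : ι → ℝ} :
    y ∈ columnCone M ↔ ∃ t : ι → ℝ, (∀ k, 0 ≤ t k) ∧ y = ∑ k, t k • M.col k := by
  rw [columnCone, PointedCone.hull, Submodule.mem_span_range_iff_exists_fun]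
  constructor
  · rintro ⟨t, rfl⟩
    exact ⟨fun k ↦ t k, fun k ↦ (t k).2, rfl⟩
  · rintro ⟨t, ht, rfl⟩
    exact ⟨fun k ↦ ⟨t k, ht k⟩, rfl⟩

theorem mem_dualCone_columnCone {M : Matrix ι ι ℝ} {φ : ι → ℝ} :
    φ ∈ dualCone (columnCone M : Set (ι → ℝ)) ↔ ∀ k, 0 ≤ (φ ᵥ* M) k := by
  rw [columnCone, dualCone, PointedCone.dual_hull, PointedCone.mem_dual, forall_mem_range]
  simp only [dotProductBilin_apply_apply, dotProduct_comm _ φ]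
  rfl

variable [DecidableEq ι]

theorem mem_columnCone_iff_nonneg {M : Matrix ι ι ℝ} (hM : M.det ≠ 0) {x : ι → ℝ} :
    x ∈ columnCone M ↔ ∀ k, 0 ≤ (M⁻¹ *ᵥ x) k := by
  have hsum (t : ι → ℝ) : ∑ k, t k • M.col k = M *ᵥ t := by
    simp only [M.mulVec_eq_sum, op_smul_eq_smul]
    rfl
  simp only [mem_columnCone_iff_exists, hsum]
  constructor
  · rintro ⟨t, ht, rfl⟩
    simpa [mulVec_mulVec, nonsing_inv_mul _ hM.isUnit] using ht
  · exact fun h ↦ ⟨_, h, by simp [mulVec_mulVec, mul_nonsing_inv _ hM.isUnit]⟩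

/-- The cone cut out by those facet inequalities of `columnCone M` that are indexed by `J`; the
rows of `M⁻¹` are the inner facet normals. -/
def facetCone (M : Matrix ι ι ℝ) (J : Finset ι) : PointedCone ℝ (ι → ℝ) :=
  dualCone (M⁻¹.row '' J)

theorem mem_facetCone {M : Matrix ι ι ℝ} {J : Finset ι} {x : ι → ℝ} :
    x ∈ facetCone M J ↔ ∀ k ∈ J, 0 ≤ (M⁻¹ *ᵥ x) k := by
  rw [facetCone, PointedCone.mem_dual, forall_mem_image]
  rfl

theorem facetCone_univ {M : Matrix ι ι ℝ} (hM : M.det ≠ 0) :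
    facetCone M Finset.univ = columnCone M := by
  ext x
  simp [mem_facetCone, mem_columnCone_iff_nonneg hM]

/- Dropping a facet inequality leaves a cone containing a line, on which a generic functional
is unbounded. -/
theorem mem_dualCone_facetCone_iff {M : Matrix ι ι ℝ} (hM : M.det ≠ 0) {J : Finset ι}
    {φ : ι → ℝ} (hφ : ∀ k, (φ ᵥ* M) k ≠ 0) :
    φ ∈ dualCone (facetCone M J : Set (ι → ℝ)) ↔
      J = Finset.univ ∧ φ ∈ dualCone (columnCone M : Set (ι → ℝ)) := by
  constructor
  · intro h
    have hJ : J = Finset.univ := by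
      by_contra hne
      obtain ⟨k, hk⟩ := not_forall.1 (mt Finset.eq_univ_iff_forall.2 hne)
      have hmem : M *ᵥ Pi.single k (-(φ ᵥ* M) k) ∈ facetCone M J := by
        refine mem_facetCone.2 fun j hj ↦ ?_
        rw [mulVec_mulVec, nonsing_inv_mul _ hM.isUnit, one_mulVec,
          Pi.single_eq_of_ne (ne_of_mem_of_not_mem hj hk)]
      have hpair : 0 ≤ (M *ᵥ Pi.single k (-(φ ᵥ* M) k)) ⬝ᵥ φ := h hmem
      rw [dotProduct_comm, dotProduct_mulVec, dotProduct_single, mul_neg] at hpair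
      exact (neg_neg_of_pos (mul_self_pos.2 (hφ k))).not_ge hpair
    exact ⟨hJ, facetCone_univ hM ▸ hJ ▸ h⟩
  · rintro ⟨rfl, h⟩
    rwa [facetCone_univ hM]

end SimplicialCone

section Dissection

variable {ι : Type*} [Fintype ι] [DecidableEq ι] {M : Matrix ι ι ℝ} {X x : ι → ℝ}

/-- A finite set of matrices is a simplicial dissection of a cone `C` if the cones spanned by the
columns of these matrices are full-dimensional, cover `C`, and overlap pairwise in null sets. -/
structure IsSimplicialDissection (T : Finset (Matrix ι ι ℝ)) (C : PointedCone ℝ (ι → ℝ)) :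
    Prop where
  det_ne_zero : ∀ M ∈ T, M.det ≠ 0
  coe_eq_biUnion : (C : Set (ι → ℝ)) = ⋃ M ∈ T, (columnCone M : Set (ι → ℝ))
  pairwise_aedisjoint : (T : Set (Matrix ι ι ℝ)).Pairwise fun M M' ↦
    AEDisjoint volume (columnCone M : Set (ι → ℝ)) (columnCone M')

/-- The matrix `M` with its columns rescaled, possibly by negative factors, so that they add up
to `X`. -/
noncomputable def reorient (M : Matrix ι ι ℝ) (X : ι → ℝ) : Matrix ι ι ℝ :=
  M * diagonal (M⁻¹ *ᵥ X)

/-- The indices of the columns of `M` whose direction is reversed in `reorient M X`. -/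
noncomputable def flippedColumns (M : Matrix ι ι ℝ) (X : ι → ℝ) : Finset ι :=
  {k | (M⁻¹ *ᵥ X) k < 0}

/-- The half-open simplicial cone consisting of the `x` for which `x + ε X` lies in
`columnCone M` for all small `ε > 0`. -/
def halfOpenCone (M : Matrix ι ι ℝ) (X : ι → ℝ) : Set (ι → ℝ) :=
  {x | ∀ k, 0 ≤ ((reorient M X)⁻¹ *ᵥ x) k ↔ k ∉ flippedColumns M X}

theorem det_reorient (M : Matrix ι ι ℝ) (X : ι → ℝ) :
    (reorient M X).det = M.det * ∏ k, (M⁻¹ *ᵥ X) k := by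
  rw [reorient, det_mul, det_diagonal]

theorem det_reorient_ne_zero (hM : M.det ≠ 0) (hX : ∀ k, (M⁻¹ *ᵥ X) k ≠ 0) :
    (reorient M X).det ≠ 0 := by
  rw [det_reorient]
  exact mul_ne_zero hM (Finset.prod_ne_zero_iff.2 fun k _ ↦ hX k)

theorem reorient_mulVec_one (hM : M.det ≠ 0) (X : ι → ℝ) : reorient M X *ᵥ 1 = X := by
  have hone : diagonal (M⁻¹ *ᵥ X) *ᵥ 1 = M⁻¹ *ᵥ X := by
    ext k
    rw [mulVec_diagonal, Pi.one_apply, mul_one]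
  rw [reorient, ← mulVec_mulVec, hone, mulVec_mulVec, mul_nonsing_inv _ hM.isUnit, one_mulVec]

theorem inv_mulVec_add_smul (hM : M.det ≠ 0) (hX : ∀ k, (M⁻¹ *ᵥ X) k ≠ 0) (ε : ℝ) (k : ι) :
    (M⁻¹ *ᵥ (x + ε • X)) k = (M⁻¹ *ᵥ X) k * (((reorient M X)⁻¹ *ᵥ x) k + ε) := by
  have hinv : M⁻¹ *ᵥ x = diagonal (M⁻¹ *ᵥ X) *ᵥ ((reorient M X)⁻¹ *ᵥ x) := by
    have hdiag : diagonal (M⁻¹ *ᵥ X) = M⁻¹ * reorient M X := by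
      rw [reorient, nonsing_inv_mul_cancel_left _ _ hM.isUnit]
    rw [hdiag, ← mulVec_mulVec, mulVec_mulVec _ (reorient M X),
      mul_nonsing_inv _ (det_reorient_ne_zero hM hX).isUnit, one_mulVec]
  rw [mulVec_add, mulVec_smul, hinv, Pi.add_apply, mulVec_diagonal, Pi.smul_apply, smul_eq_mul,
    mul_add, mul_comm ε]

theorem eventually_nonneg_mul_add_iff {a : ℝ} (ha : a ≠ 0) (t : ℝ) :
    ∀ᶠ ε in 𝓝[>] 0, t + ε ≠ 0 ∧ (0 ≤ a * (t + ε) ↔ (0 ≤ t ↔ ¬ a < 0)) := by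
  have hsign : ∀ᶠ ε in 𝓝[>] 0, t + ε ≠ 0 ∧ (0 < t + ε ↔ 0 ≤ t) := by
    rcases lt_or_ge t 0 with ht | ht
    · filter_upwards [Ioo_mem_nhdsGT (neg_pos.2 ht)] with ε hε
      have hneg : t + ε < 0 := by linarith [hε.2]
      exact ⟨hneg.ne, iff_of_false hneg.not_gt ht.not_ge⟩
    · filter_upwards [self_mem_nhdsWithin] with ε hε
      have hpos : 0 < t + ε := add_pos_of_nonneg_of_pos ht hε
      exact ⟨hpos.ne', iff_of_true hpos ht⟩
  filter_upwards [hsign] with ε hε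
  refine ⟨hε.1, ?_⟩
  rw [← hε.2]
  rcases ha.lt_or_gt with h | h
  · rw [mul_nonneg_iff_neg_imp_nonpos]
    simp [h, h.le, hε.1.le_iff_lt]
  · simp [h, h.not_gt, hε.1.symm.le_iff_lt]

theorem eventually_add_smul_mem_columnCone_iff (hM : M.det ≠ 0) (hX : ∀ k, (M⁻¹ *ᵥ X) k ≠ 0)
    (x : ι → ℝ) : ∀ᶠ ε : ℝ in 𝓝[>] 0, (∀ k, (M⁻¹ *ᵥ (x + ε • X)) k ≠ 0) ∧
      (x + ε • X ∈ columnCone M ↔ x ∈ halfOpenCone M X) := by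
  have hcoord := eventually_all.2 fun k ↦
    eventually_nonneg_mul_add_iff (hX k) (((reorient M X)⁻¹ *ᵥ x) k)
  filter_upwards [hcoord] with ε hε
  simp only [mem_columnCone_iff_nonneg hM, inv_mulVec_add_smul hM hX]
  refine ⟨fun k ↦ mul_ne_zero (hX k) (hε k).1, forall_congr' fun k ↦ ?_⟩
  simpa [flippedColumns] using (hε k).2

theorem eventually_add_smul_mem_iff {E : Type*} [AddCommGroup E] [Module ℝ E] [TopologicalSpace E]
    [ContinuousAdd E] [ContinuousSMul ℝ E] {C : PointedCone ℝ E} (hC : IsClosed (C : Set E))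
    {X : E} (hX : X ∈ C) (x : E) : ∀ᶠ ε : ℝ in 𝓝[>] 0, x + ε • X ∈ C ↔ x ∈ C := by
  by_cases hx : x ∈ C
  · filter_upwards [self_mem_nhdsWithin] with ε hε
    exact iff_of_true (add_mem hx (C.smul_mem (le_of_lt hε) hX)) hx
  · have hlim : Tendsto (fun ε : ℝ ↦ x + ε • X) (𝓝 0) (𝓝 x) :=
      Continuous.tendsto' (by fun_prop) _ _ (by simp)
    filter_upwards [nhdsWithin_le_nhds (hlim.eventually (hC.isOpen_compl.mem_nhds hx))] with ε hε
    exact iff_of_false hε hx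

namespace IsSimplicialDissection

variable {T : Finset (Matrix ι ι ℝ)} {C : PointedCone ℝ (ι → ℝ)}

theorem mem_iff (hT : IsSimplicialDissection T C) : x ∈ C ↔ ∃ M ∈ T, x ∈ columnCone M := by
  simp only [← SetLike.mem_coe, hT.coe_eq_biUnion, mem_iUnion, exists_prop]

theorem isClosed (hT : IsSimplicialDissection T C) : IsClosed (C : Set (ι → ℝ)) := by
  rw [hT.coe_eq_biUnion]
  exact T.finite_toSet.isClosed_biUnion fun M hM ↦
    facetCone_univ (hT.det_ne_zero M hM) ▸ isClosed_dualCone _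

/- Two of the cones cannot share an interior point: they would overlap in a nonempty open set. -/
theorem eq_of_mem_columnCone (hT : IsSimplicialDissection T C) {M M' : Matrix ι ι ℝ} (hM : M ∈ T)
    (hM' : M' ∈ T) (hx : x ∈ columnCone M) (hx' : x ∈ columnCone M')
    (hx0 : ∀ k, (M⁻¹ *ᵥ x) k ≠ 0) (hx0' : ∀ k, (M'⁻¹ *ᵥ x) k ≠ 0) : M = M' := by
  have hopen (N : Matrix ι ι ℝ) : IsOpen {y | ∀ k, 0 < (N⁻¹ *ᵥ y) k} := by
    simp only [ofPred_forall]
    exact isOpen_iInter_of_finite fun k ↦ isOpen_lt continuous_const (by fun_prop)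
  have hsub {N : Matrix ι ι ℝ} (hN : N ∈ T) :
      {y | ∀ k, 0 < (N⁻¹ *ᵥ y) k} ⊆ (columnCone N : Set (ι → ℝ)) := fun y hy ↦
    (mem_columnCone_iff_nonneg (hT.det_ne_zero N hN)).2 fun k ↦ (hy k).le
  have hpos {N : Matrix ι ι ℝ} (hN : N ∈ T) (h : x ∈ columnCone N) (h0 : ∀ k, (N⁻¹ *ᵥ x) k ≠ 0) :
      ∀ k, 0 < (N⁻¹ *ᵥ x) k := fun k ↦
    ((mem_columnCone_iff_nonneg (hT.det_ne_zero N hN)).1 h k).lt_of_ne' (h0 k)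
  by_contra hne
  refine (((hopen M).inter (hopen M')).measure_pos volume ?_).ne'
    (measure_mono_null (inter_subset_inter (hsub hM) (hsub hM'))
      (hT.pairwise_aedisjoint hM hM' hne))
  exact ⟨x, hpos hM hx hx0, hpos hM' hx' hx0'⟩

open scoped Classical in
theorem card_filter_mem_columnCone (hT : IsSimplicialDissection T C)
    (hx : ∀ M ∈ T, ∀ k, (M⁻¹ *ᵥ x) k ≠ 0) :
    #{M ∈ T | x ∈ columnCone M} = if x ∈ C then 1 else 0 := by
  split_ifs with h
  · obtain ⟨M, hM, hxM⟩ := hT.mem_iff.1 h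
    refine Finset.card_eq_one.2 ⟨M, Finset.eq_singleton_iff_unique_mem.2
      ⟨Finset.mem_filter.2 ⟨hM, hxM⟩, fun M' hM' ↦ ?_⟩⟩
    obtain ⟨hM'T, hxM'⟩ := Finset.mem_filter.1 hM'
    exact hT.eq_of_mem_columnCone hM'T hM hxM' hxM (hx M' hM'T) (hx M hM)
  · exact Finset.card_eq_zero.2 <| Finset.filter_eq_empty_iff.2 fun M hM hxM ↦
      h (hT.mem_iff.2 ⟨M, hM, hxM⟩)

open scoped Classical in
theorem card_filter_mem_halfOpenCone (hT : IsSimplicialDissection T C) (hXC : X ∈ C)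
    (hX : ∀ M ∈ T, ∀ k, (M⁻¹ *ᵥ X) k ≠ 0) (x : ι → ℝ) :
    #{M ∈ T | x ∈ halfOpenCone M X} = if x ∈ C then 1 else 0 := by
  have hcone := (eventually_all_finset T).2 fun M hM ↦
    eventually_add_smul_mem_columnCone_iff (hT.det_ne_zero M hM) (hX M hM) x
  obtain ⟨ε, hε, hεC⟩ := (hcone.and (eventually_add_smul_mem_iff hT.isClosed hXC x)).exists
  rw [← Finset.filter_congr fun M hM ↦ (hε M hM).2,
    hT.card_filter_mem_columnCone fun M hM ↦ (hε M hM).1]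
  exact if_congr hεC rfl rfl

end IsSimplicialDissection

open scoped Classical in
theorem sum_filter_mem_facetCone_neg_one_pow_card (M : Matrix ι ι ℝ) (X x : ι → ℝ) :
    ∑ J ∈ (flippedColumns M X).powerset with
        x ∈ facetCone (reorient M X) ((flippedColumns M X)ᶜ ∪ J), (-1 : ℤ) ^ #J =
      if x ∈ halfOpenCone M X then 1 else 0 := by
  set S := flippedColumns M X
  by_cases hx : ∀ k ∉ S, 0 ≤ ((reorient M X)⁻¹ *ᵥ x) k
  · have hfilter : {J ∈ S.powerset | x ∈ facetCone (reorient M X) (Sᶜ ∪ J)} =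
        Finset.powerset {k ∈ S | 0 ≤ ((reorient M X)⁻¹ *ᵥ x) k} := by
      ext J
      simp only [Finset.mem_filter, Finset.mem_powerset, mem_facetCone, Finset.subset_iff,
        Finset.mem_union, Finset.mem_compl]
      grind
    rw [hfilter, Finset.sum_powerset_neg_one_pow_card]
    refine if_congr (Finset.filter_eq_empty_iff.trans ?_) rfl rfl
    exact ⟨fun h k ↦ ⟨fun hk hkS ↦ h hkS hk, hx k⟩, fun h k hkS hk ↦ (h k).1 hk hkS⟩
  · rw [if_neg fun h ↦ hx fun k hk ↦ (h k).2 hk, Finset.sum_filter]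
    refine Finset.sum_eq_zero fun J _ ↦ if_neg fun h ↦ hx fun k hk ↦ ?_
    exact mem_facetCone.1 h k (Finset.mem_union_left _ (Finset.mem_compl.2 hk))

open scoped Classical in
/- The half-open cones partition `C`, and each is an alternating sum of closed cones. Dualizing this
relation, only the closed cones without lines survive at a generic `φ`. -/
theorem IsSimplicialDissection.sum_filter_mem_dualCone_reorient {T : Finset (Matrix ι ι ℝ)}
    {C : PointedCone ℝ (ι → ℝ)} (hT : IsSimplicialDissection T C) (hXC : X ∈ C)
    (hX : ∀ M ∈ T, ∀ k, (M⁻¹ *ᵥ X) k ≠ 0) {φ : ι → ℝ}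
    (hφ : ∀ M ∈ T, ∀ k, (φ ᵥ* reorient M X) k ≠ 0) :
    ∑ M ∈ T with φ ∈ dualCone (columnCone (reorient M X) : Set (ι → ℝ)),
      (-1 : ℤ) ^ #(flippedColumns M X) = if φ ∈ dualCone (C : Set (ι → ℝ)) then 1 else 0 := by
  let K (i : (_ : Matrix ι ι ℝ) × Finset ι) : PointedCone ℝ (ι → ℝ) :=
    facetCone (reorient i.1 X) ((flippedColumns i.1 X)ᶜ ∪ i.2)
  have hK (x : ι → ℝ) : ∑ i ∈ T.sigma fun M ↦ (flippedColumns M X).powerset with x ∈ K i,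
      (-1 : ℤ) ^ #i.2 = if x ∈ C then 1 else 0 := by
    have hcard := congrArg (Nat.cast : ℕ → ℤ) (hT.card_filter_mem_halfOpenCone hXC hX x)
    simp only [Finset.card_eq_sum_ones, Finset.sum_filter, Nat.cast_sum, Nat.cast_ite,
      Nat.cast_one, Nat.cast_zero] at hcard
    rw [← hcard, Finset.sum_filter, Finset.sum_sigma]
    refine Finset.sum_congr rfl fun M _ ↦ ?_
    rw [← Finset.sum_filter, sum_filter_mem_facetCone_neg_one_pow_card]
  rw [← sum_filter_mem_dual_eq_ite (K := K) (fun i _ ↦ isClosed_dualCone _) hT.isClosed hK φ,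
    Finset.sum_filter, Finset.sum_filter, Finset.sum_sigma]
  refine Finset.sum_congr rfl fun M hM ↦ ?_
  have hN := det_reorient_ne_zero (hT.det_ne_zero M hM) (hX M hM)
  have hmem : ∀ J ∈ (flippedColumns M X).powerset,
      φ ∈ dualCone (K ⟨M, J⟩ : Set (ι → ℝ)) ↔ J = flippedColumns M X ∧
        φ ∈ dualCone (columnCone (reorient M X) : Set (ι → ℝ)) := fun J hJ ↦ by
    refine (mem_dualCone_facetCone_iff hN (hφ M hM)).trans (and_congr_left' ?_)
    have hJsub := Finset.mem_powerset.1 hJ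
    rw [Finset.eq_univ_iff_forall]
    exact ⟨fun h ↦ hJsub.antisymm fun k hk ↦ by simpa [hk] using h k, fun h k ↦ by simp [h, em']⟩
  rw [Finset.sum_congr rfl fun J hJ ↦ if_congr (hmem J hJ) rfl rfl]
  simp [ite_and]

end Dissection

section ExpIntegral

variable {ι : Type*} [Fintype ι] {v : ι → ℝ}

theorem exp_neg_dotProduct (v h : ι → ℝ) : exp (-(v ⬝ᵥ h)) = ∏ j, exp (-v j * h j) := by
  simp only [← exp_sum, neg_mul, Finset.sum_neg_distrib, dotProduct]

theorem volume_restrict_Ici (b : ι → ℝ) :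
    volume.restrict (Ici b) = Measure.pi fun j ↦ volume.restrict (Ici (b j)) := by
  rw [← pi_univ_Ici, volume_pi, Measure.restrict_pi_pi]

theorem integrableOn_exp_neg_dotProduct_Ici (hv : ∀ j, 0 < v j) (b : ι → ℝ) :
    IntegrableOn (fun h ↦ exp (-(v ⬝ᵥ h))) (Ici b) := by
  simp only [IntegrableOn, exp_neg_dotProduct, volume_restrict_Ici]
  exact Integrable.fintype_prod fun j ↦ (integrableOn_Ici_iff_integrableOn_Ioi).2 <|
    integrableOn_exp_mul_Ioi (neg_lt_zero.2 (hv j)) _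

theorem integral_exp_neg_dotProduct_Ici (hv : ∀ j, 0 < v j) (b : ι → ℝ) :
    ∫ h in Ici b, exp (-(v ⬝ᵥ h)) = (∏ j, v j)⁻¹ * exp (-(v ⬝ᵥ b)) := by
  simp only [exp_neg_dotProduct, volume_restrict_Ici]
  rw [integral_fintype_prod_eq_prod fun j y ↦ exp (-v j * y), ← Finset.prod_inv_distrib,
    ← Finset.prod_mul_distrib]
  refine Finset.prod_congr rfl fun j _ ↦ ?_
  rw [integral_Ici_eq_integral_Ioi, integral_exp_mul_Ioi (neg_lt_zero.2 (hv j)),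
    neg_div_neg_eq, div_eq_inv_mul]

variable {M : Matrix ι ι ℝ} {a : ι → ℝ}

theorem coe_dualCone_columnCone (M : Matrix ι ι ℝ) :
    (dualCone (columnCone M : Set (ι → ℝ)) : Set (ι → ℝ)) = M.vecMulLinear ⁻¹' Ici 0 := by
  ext φ
  exact mem_dualCone_columnCone

variable [DecidableEq ι]

theorem map_vecMulLinear_volume (hM : M.det ≠ 0) :
    Measure.map M.vecMulLinear volume = ENNReal.ofReal |M.det|⁻¹ • volume := by
  have htoLin : toLin' Mᵀ = M.vecMulLinear := LinearMap.ext fun φ ↦ mulVec_transpose M φ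
  rw [← htoLin, Real.map_matrix_volume_pi_eq_smul_volume_pi (by rwa [det_transpose]),
    det_transpose, abs_inv]

theorem integrableOn_exp_neg_dotProduct_dualCone_columnCone (hM : M.det ≠ 0) (ha : ∀ k, 0 < a k) :
    IntegrableOn (fun φ ↦ exp (-((M *ᵥ a) ⬝ᵥ φ)))
      (dualCone (columnCone M : Set (ι → ℝ)) : Set (ι → ℝ)) := by
  have hmeas : Measurable M.vecMulLinear :=
    (LinearMap.continuous_of_finiteDimensional _).measurable
  have hint : IntegrableOn (fun y ↦ exp (-(a ⬝ᵥ y))) (Ici 0)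
      (Measure.map M.vecMulLinear volume) := by
    rw [map_vecMulLinear_volume hM, IntegrableOn, Measure.restrict_smul]
    exact (integrableOn_exp_neg_dotProduct_Ici ha 0).smul_measure ENNReal.ofReal_ne_top
  rw [IntegrableOn, Measure.restrict_map hmeas measurableSet_Ici, ← coe_dualCone_columnCone] at hint
  simp only [dotProduct_comm (M *ᵥ a), dotProduct_mulVec, dotProduct_comm _ a]
  exact hint.comp_measurable hmeas

theorem integral_exp_neg_dotProduct_dualCone_columnCone (hM : M.det ≠ 0) (ha : ∀ k, 0 < a k) :
    ∫ φ in (dualCone (columnCone M : Set (ι → ℝ)) : Set (ι → ℝ)), exp (-((M *ᵥ a) ⬝ᵥ φ)) =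
      (|M.det| * ∏ k, a k)⁻¹ := by
  have hmeas : Measurable M.vecMulLinear :=
    (LinearMap.continuous_of_finiteDimensional _).measurable
  have hcont : Continuous fun y ↦ exp (-(a ⬝ᵥ y)) := by fun_prop
  calc ∫ φ in (dualCone (columnCone M : Set (ι → ℝ)) : Set (ι → ℝ)), exp (-((M *ᵥ a) ⬝ᵥ φ))
    _ = ∫ φ in M.vecMulLinear ⁻¹' Ici 0, exp (-(a ⬝ᵥ M.vecMulLinear φ)) := by
      simp only [coe_dualCone_columnCone, dotProduct_comm (M *ᵥ a), dotProduct_mulVec,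
        dotProduct_comm _ a, vecMulLinear_apply]
    _ = |M.det|⁻¹ * ∫ y in Ici 0, exp (-(a ⬝ᵥ y)) := by
      rw [← setIntegral_map measurableSet_Ici hcont.aestronglyMeasurable hmeas.aemeasurable,
        map_vecMulLinear_volume hM, Measure.restrict_smul, integral_smul_measure,
        ENNReal.toReal_ofReal (by positivity), smul_eq_mul]
    _ = (|M.det| * ∏ k, a k)⁻¹ := by
      rw [integral_exp_neg_dotProduct_Ici ha, dotProduct_zero, neg_zero, exp_zero, mul_one, mul_inv]

theorem ae_vecMul_ne_zero (hM : M.det ≠ 0) : ∀ᵐ φ : ι → ℝ, ∀ k, (φ ᵥ* M) k ≠ 0 := by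
  refine ae_all_iff.2 fun k ↦ ?_
  have hker : (LinearMap.proj k ∘ₗ M.vecMulLinear : (ι → ℝ) →ₗ[ℝ] ℝ).ker ≠ ⊤ := by
    intro h
    have hzero : ((Pi.single k 1 ᵥ* M⁻¹) ᵥ* M) k = 0 :=
      LinearMap.congr_fun (LinearMap.ker_eq_top.1 h) (Pi.single k 1 ᵥ* M⁻¹)
    rw [vecMul_vecMul, nonsing_inv_mul _ hM.isUnit, vecMul_one, Pi.single_eq_same] at hzero
    exact one_ne_zero hzero
  exact measure_eq_zero_iff_ae_notMem.1 (Measure.addHaar_submodule volume _ hker)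

end ExpIntegral

section FillimanIntegral

variable {ι : Type*} [Fintype ι] [DecidableEq ι] {M : Matrix ι ι ℝ} {X : ι → ℝ}

theorem neg_one_pow_card_flippedColumns_mul_inv_abs_det (M : Matrix ι ι ℝ) (X : ι → ℝ) :
    (-1) ^ #(flippedColumns M X) * |(reorient M X).det|⁻¹ =
      1 / (|M.det| * ∏ k, (M⁻¹ *ᵥ X) k) := by
  have hsign (k : ι) : (if (M⁻¹ *ᵥ X) k < 0 then -1 else 1) * |(M⁻¹ *ᵥ X) k|⁻¹ =
      ((M⁻¹ *ᵥ X) k)⁻¹ := by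
    split_ifs with h
    · rw [abs_of_neg h, inv_neg, neg_one_mul, neg_neg]
    · rw [abs_of_nonneg (not_lt.1 h), one_mul]
  calc (-1) ^ #(flippedColumns M X) * |(reorient M X).det|⁻¹
    _ = |M.det|⁻¹ * ∏ k, (if (M⁻¹ *ᵥ X) k < 0 then -1 else 1) * |(M⁻¹ *ᵥ X) k|⁻¹ := by
      rw [Finset.prod_mul_distrib, ← Finset.prod_filter, Finset.prod_const, Finset.prod_inv_distrib,
        ← Finset.abs_prod, det_reorient, abs_mul, mul_inv, mul_left_comm]
      rfl
    _ = 1 / (|M.det| * ∏ k, (M⁻¹ *ᵥ X) k) := by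
      simp only [hsign, Finset.prod_inv_distrib, one_div, mul_inv]

namespace IsSimplicialDissection

variable {T : Finset (Matrix ι ι ℝ)} {C : PointedCone ℝ (ι → ℝ)}

theorem indicator_dualCone_ae_eq_sum (hT : IsSimplicialDissection T C) (hXC : X ∈ C)
    (hX : ∀ M ∈ T, ∀ k, (M⁻¹ *ᵥ X) k ≠ 0) (f : (ι → ℝ) → ℝ) :
    (dualCone (C : Set (ι → ℝ)) : Set (ι → ℝ)).indicator f =ᵐ[volume]
      ∑ M ∈ T, (-1 : ℝ) ^ #(flippedColumns M X) •
        (dualCone (columnCone (reorient M X) : Set (ι → ℝ)) : Set (ι → ℝ)).indicator f := by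
  classical
  have hgen := (eventually_all_finset T).2 fun M hM ↦
    ae_vecMul_ne_zero (det_reorient_ne_zero (hT.det_ne_zero M hM) (hX M hM))
  filter_upwards [hgen] with φ hφ
  have h := congrArg (fun m : ℤ ↦ (m : ℝ) * f φ)
    (hT.sum_filter_mem_dualCone_reorient hXC hX hφ)
  simp only [Finset.sum_filter] at h
  push_cast at h
  simpa [indicator_apply, Finset.sum_mul] using h.symm

theorem integrable_indicator_dualCone_reorient (hT : IsSimplicialDissection T C)
    (hX : ∀ M ∈ T, ∀ k, (M⁻¹ *ᵥ X) k ≠ 0) (hM : M ∈ T) :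
    Integrable ((dualCone (columnCone (reorient M X) : Set (ι → ℝ)) : Set (ι → ℝ)).indicator
      fun φ ↦ exp (-(X ⬝ᵥ φ))) := by
  have hdet := hT.det_ne_zero M hM
  rw [integrable_indicator_iff (isClosed_dualCone _).measurableSet]
  simpa only [reorient_mulVec_one hdet X] using
    integrableOn_exp_neg_dotProduct_dualCone_columnCone (a := 1)
      (det_reorient_ne_zero hdet (hX M hM)) fun _ ↦ one_pos

theorem integrableOn_exp_neg_dotProduct_dualCone (hT : IsSimplicialDissection T C) (hXC : X ∈ C)
    (hX : ∀ M ∈ T, ∀ k, (M⁻¹ *ᵥ X) k ≠ 0) :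
    IntegrableOn (fun φ ↦ exp (-(X ⬝ᵥ φ))) (dualCone (C : Set (ι → ℝ)) : Set (ι → ℝ)) := by
  rw [← integrable_indicator_iff (isClosed_dualCone _).measurableSet]
  exact (integrable_finsetSum' T fun M hM ↦
    (hT.integrable_indicator_dualCone_reorient hX hM).smul _).congr
    (hT.indicator_dualCone_ae_eq_sum hXC hX _).symm

theorem integral_exp_neg_dotProduct_dualCone (hT : IsSimplicialDissection T C) (hXC : X ∈ C)
    (hX : ∀ M ∈ T, ∀ k, (M⁻¹ *ᵥ X) k ≠ 0) :
    ∫ φ in (dualCone (C : Set (ι → ℝ)) : Set (ι → ℝ)), exp (-(X ⬝ᵥ φ)) =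
      ∑ M ∈ T, 1 / (|M.det| * ∏ k, (M⁻¹ *ᵥ X) k) := by
  rw [← integral_indicator (isClosed_dualCone _).measurableSet,
    integral_congr_ae (hT.indicator_dualCone_ae_eq_sum hXC hX _)]
  simp only [Finset.sum_apply]
  rw [integral_finsetSum T fun M hM ↦
    (hT.integrable_indicator_dualCone_reorient hX hM).smul ((-1 : ℝ) ^ #(flippedColumns M X))]
  refine Finset.sum_congr rfl fun M hM ↦ ?_
  have hdet := hT.det_ne_zero M hM
  have hcone := integral_exp_neg_dotProduct_dualCone_columnCone (a := 1)
    (det_reorient_ne_zero hdet (hX M hM)) fun _ ↦ one_pos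
  simp only [reorient_mulVec_one hdet X, Pi.one_apply, Finset.prod_const_one, mul_one] at hcone
  simp only [Pi.smul_apply]
  rw [integral_smul, integral_indicator (isClosed_dualCone _).measurableSet, hcone,
    smul_eq_mul, neg_one_pow_card_flippedColumns_mul_inv_abs_det]

end IsSimplicialDissection

end FillimanIntegral

section Homogeneous

variable {E : Type*} [MeasurableSpace E] {μ : Measure E} {g : E → ℝ}

theorem lintegral_ofReal_exp_neg_Ioi (c : ℝ) :
    ∫⁻ s in Ioi c, ENNReal.ofReal (exp (-s)) = ENNReal.ofReal (exp (-c)) := by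
  rw [← ofReal_integral_eq_lintegral_ofReal (integrableOn_exp_neg_Ioi c)
    (Eventually.of_forall fun s ↦ (exp_pos _).le), integral_exp_neg_Ioi]

theorem lintegral_exp_neg_eq_lintegral_measure_le [SFinite μ] (hg : Measurable g)
    (hg0 : ∀ x, 0 ≤ g x) : ∫⁻ x, ENNReal.ofReal (exp (-g x)) ∂μ =
      ∫⁻ s in Ioi 0, ENNReal.ofReal (exp (-s)) * μ {x | g x ≤ s} := by
  let F (s : ℝ) := ENNReal.ofReal (exp (-s))
  have hlayer (x : E) : F (g x) = ∫⁻ s in Ioi 0, (Ici (g x)).indicator F s := by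
    have hIoi : (Ici (g x) ∩ Ioi 0 : Set ℝ) =ᵐ[volume] Ioi (g x) :=
      (Ioi_ae_eq_Ici.symm.inter (EventuallyEq.refl _ (Ioi 0))).trans
        (inter_eq_left.2 (Ioi_subset_Ioi (hg0 x))).eventuallyEq
    rw [setLIntegral_indicator measurableSet_Ici, setLIntegral_congr hIoi,
      lintegral_ofReal_exp_neg_Ioi]
  have hmeas : Measurable (Function.uncurry fun (x : E) s ↦ (Ici (g x)).indicator F s) :=
    Measurable.indicator (f := fun p : E × ℝ ↦ F p.2) (by fun_prop)
      (measurableSet_le (hg.comp measurable_fst) measurable_snd)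
  calc ∫⁻ x, F (g x) ∂μ
    _ = ∫⁻ s in Ioi 0, ∫⁻ x, (Ici (g x)).indicator F s ∂μ := by
      simp only [hlayer]
      exact lintegral_lintegral_swap hmeas.aemeasurable
    _ = ∫⁻ s in Ioi 0, F s * μ {x | g x ≤ s} := lintegral_congr fun s ↦
      lintegral_indicator_const (measurableSet_le hg measurable_const) (F s)

theorem lintegral_exp_neg_mul_pow (n : ℕ) :
    ∫⁻ s in Ioi 0, ENNReal.ofReal (exp (-s) * s ^ n) = n.factorial := by
  have hgamma := Gamma_eq_integral (s := n + 1) (by positivity)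
  have hconv := GammaIntegral_convergent (s := n + 1) (by positivity)
  simp only [add_sub_cancel_right, rpow_natCast, Gamma_nat_eq_factorial] at hgamma hconv
  rw [← ofReal_integral_eq_lintegral_ofReal hconv, ← hgamma, ENNReal.ofReal_natCast]
  filter_upwards [self_mem_ae_restrict measurableSet_Ioi] with s hs
  exact mul_nonneg (exp_pos _).le (pow_nonneg (le_of_lt hs) n)

variable [NormedAddCommGroup E] [NormedSpace ℝ E] [FiniteDimensional ℝ E] [BorelSpace E]
  [μ.IsAddHaarMeasure]

theorem addHaar_setOf_le_of_homogeneous (hgs : ∀ r : ℝ, 0 < r → ∀ x, g (r • x) = r * g x) {s : ℝ}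
    (hs : 0 < s) :
    μ {x | g x ≤ s} = ENNReal.ofReal (s ^ Module.finrank ℝ E) * μ {x | g x ≤ 1} := by
  have hsmul : {x | g x ≤ s} = s • {x | g x ≤ 1} := by
    ext x
    rw [mem_smul_set_iff_inv_smul_mem₀ hs.ne', mem_ofPred_eq, mem_ofPred_eq,
      hgs _ (inv_pos.2 hs), inv_mul_le_one₀ hs]
  rw [hsmul, Measure.addHaar_smul, abs_of_pos (pow_pos hs _)]

theorem lintegral_exp_neg_of_homogeneous (hg : Measurable g) (hg0 : ∀ x, 0 ≤ g x)
    (hgs : ∀ r : ℝ, 0 < r → ∀ x, g (r • x) = r * g x) :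
    ∫⁻ x, ENNReal.ofReal (exp (-g x)) ∂μ =
      (Module.finrank ℝ E).factorial * μ {x | g x ≤ 1} := by
  rw [lintegral_exp_neg_eq_lintegral_measure_le hg hg0, ← lintegral_exp_neg_mul_pow,
    ← lintegral_mul_const _ (by fun_prop)]
  refine setLIntegral_congr_fun measurableSet_Ioi fun s hs ↦ ?_
  rw [addHaar_setOf_le_of_homogeneous hgs hs, ← mul_assoc, ← ENNReal.ofReal_mul (exp_pos _).le]

end Homogeneous

section LowerSupport

theorem isLeast_image_convexHull {E : Type*} [AddCommGroup E] [Module ℝ E] {f : E →ₗ[ℝ] ℝ}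
    {K : Set E} {m : ℝ} (h : IsLeast (f '' K) m) : IsLeast (f '' convexHull ℝ K) m := by
  refine ⟨image_mono (subset_convexHull ℝ K) h.1, forall_mem_image.2 fun x hx ↦ ?_⟩
  exact convexHull_min (t := {x | m ≤ f x}) (fun y hy ↦ h.2 (mem_image_of_mem f hy))
    (convex_halfSpace_ge f.isLinear m) hx

theorem isLeast_image_smul {E : Type*} [AddCommGroup E] [Module ℝ E] {f : E →ₗ[ℝ] ℝ}
    {K : Set E} {m r : ℝ} (hr : 0 ≤ r) (h : IsLeast (f '' K) m) :
    IsLeast (f '' (r • K)) (r * m) := by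
  have himage : f '' (r • K) = (r * ·) '' (f '' K) := by
    simp only [← image_smul, image_image, map_smul, smul_eq_mul]
  rw [himage]
  exact (monotone_mul_left_of_nonneg hr).map_isLeast h

theorem isLeast_image_sum {ι E : Type*} [Fintype ι] [AddCommGroup E] [Module ℝ E] {f : E →ₗ[ℝ] ℝ}
    {K : ι → Set E} {m : ι → ℝ} (h : ∀ j, IsLeast (f '' K j) (m j)) :
    IsLeast (f '' ∑ j, K j) (∑ j, m j) := by
  choose x hx hxm using fun j ↦ (h j).1
  refine ⟨⟨∑ j, x j, (mem_fintype_sum _ _).2 ⟨x, hx, rfl⟩, by simp only [map_sum, hxm]⟩, ?_⟩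
  refine forall_mem_image.2 fun y hy ↦ ?_
  obtain ⟨z, hz, rfl⟩ := (mem_fintype_sum _ _).1 hy
  rw [map_sum]
  exact Finset.sum_le_sum fun j _ ↦ (h j).2 (mem_image_of_mem f (hz j))

variable {κ : Type*} [Fintype κ] {K : Set (κ → ℝ)} {u : κ → ℝ}

/-- The lower support function `ψ ↦ min_{x ∈ K} ⟨x, ψ⟩` of a nonempty compact set `K`. -/
noncomputable def lowerSupport (K : Set (κ → ℝ)) (ψ : κ → ℝ) : ℝ :=
  sInf ((· ⬝ᵥ ψ) '' K)

/-- The polar dual of `K` with respect to `u`, consisting of the `ψ` which are at least `-1` on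
`K - u`. -/
def polarDual (K : Set (κ → ℝ)) (u : κ → ℝ) : Set (κ → ℝ) :=
  {ψ | ∀ x ∈ K, -1 ≤ ψ ⬝ᵥ (x - u)}

theorem isLeast_lowerSupport (hK : IsCompact K) (hne : K.Nonempty) (ψ : κ → ℝ) :
    IsLeast ((· ⬝ᵥ ψ) '' K) (lowerSupport K ψ) :=
  (hK.image (by fun_prop)).isLeast_sInf (hne.image _)

theorem le_lowerSupport_iff (hK : IsCompact K) (hne : K.Nonempty) {ψ : κ → ℝ} {a : ℝ} :
    a ≤ lowerSupport K ψ ↔ ∀ x ∈ K, a ≤ x ⬝ᵥ ψ := by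
  rw [le_isGLB_iff (isLeast_lowerSupport hK hne ψ).isGLB, mem_lowerBounds, forall_mem_image]

theorem continuous_lowerSupport (hK : IsCompact K) : Continuous (lowerSupport K) :=
  hK.continuous_sInf (f := fun ψ x ↦ x ⬝ᵥ ψ)
    (Continuous.dotProduct continuous_snd continuous_fst)

theorem lowerSupport_smul {r : ℝ} (hr : 0 ≤ r) (ψ : κ → ℝ) :
    lowerSupport K (r • ψ) = r * lowerSupport K ψ := by
  simp only [lowerSupport, dotProduct_smul]
  rw [← smul_eq_mul, ← Real.sInf_smul_of_nonneg hr, ← image_smul, image_image]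

theorem lowerSupport_sum_smul_convexHull {ι : Type*} [Fintype ι] {S : ι → Set (κ → ℝ)}
    (hS : ∀ j, IsCompact (S j)) (hne : ∀ j, (S j).Nonempty) {v : ι → ℝ} (hv : ∀ j, 0 ≤ v j)
    (ψ : κ → ℝ) :
    lowerSupport (∑ j, v j • convexHull ℝ (S j)) ψ = v ⬝ᵥ fun j ↦ lowerSupport (S j) ψ :=
  (isLeast_image_sum (f := (dotProductBilin ℝ ℝ).flip ψ) fun j ↦ isLeast_image_smul (hv j) <|
    isLeast_image_convexHull (isLeast_lowerSupport (hS j) (hne j) ψ)).csInf_eq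

theorem polarDual_eq_setOf_le_one (hK : IsCompact K) (hne : K.Nonempty) (u : κ → ℝ) :
    polarDual K u = {ψ | u ⬝ᵥ ψ - lowerSupport K ψ ≤ 1} := by
  ext ψ
  rw [mem_ofPred_eq, sub_le_comm, le_lowerSupport_iff hK hne]
  refine forall₂_congr fun x _ ↦ ?_
  rw [dotProduct_sub, dotProduct_comm ψ, dotProduct_comm ψ, neg_le_sub_iff_le_add,
    sub_le_iff_le_add]

theorem lintegral_exp_lowerSupport (hK : IsCompact K) (hu : u ∈ K) :
    ∫⁻ ψ, ENNReal.ofReal (exp (-(u ⬝ᵥ ψ - lowerSupport K ψ))) =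
      (Fintype.card κ).factorial * volume (polarDual K u) := by
  have hcont := continuous_lowerSupport hK
  rw [lintegral_exp_neg_of_homogeneous (by fun_prop), Module.finrank_fintype_fun_eq_card,
    polarDual_eq_setOf_le_one hK ⟨u, hu⟩]
  · exact fun ψ ↦ sub_nonneg.2 ((isLeast_lowerSupport hK ⟨u, hu⟩ ψ).2 (mem_image_of_mem _ hu))
  · intro r hr ψ
    rw [dotProduct_smul, lowerSupport_smul hr.le, smul_eq_mul, mul_sub]

end LowerSupport

section Cayley

variable {n e : ℕ} {S : Fin e → Set (Fin n → ℝ)} {v : Fin e → ℝ} {u : Fin n → ℝ}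

theorem volume_measurePreserving_fin_append (e n : ℕ) :
    MeasurePreserving fun p : (Fin e → ℝ) × (Fin n → ℝ) ↦ Fin.append p.1 p.2 := by
  have happend : (fun p : (Fin e → ℝ) × (Fin n → ℝ) ↦ Fin.append p.1 p.2) =
      MeasurableEquiv.piCongrLeft (fun _ : Fin (e + n) ↦ ℝ) finSumFinEquiv ∘
        (MeasurableEquiv.sumPiEquivProdPi fun _ : Fin e ⊕ Fin n ↦ ℝ).symm := by
    ext p i
    obtain ⟨i, rfl⟩ := finSumFinEquiv.surjective i
    rw [Function.comp_apply, MeasurableEquiv.coe_piCongrLeft, Equiv.piCongrLeft_apply_apply]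
    rcases i with i | i <;> simp [MeasurableEquiv.coe_sumPiEquivProdPi_symm]
  rw [happend]
  exact (volume_measurePreserving_piCongrLeft _ _).comp
    (volume_measurePreserving_sumPiEquivProdPi_symm fun _ ↦ ℝ)

theorem integral_eq_integral_integral_append {F : (Fin (e + n) → ℝ) → ℝ} (hF : Integrable F) :
    ∫ φ, F φ = ∫ ψ : Fin n → ℝ, ∫ h : Fin e → ℝ, F (Fin.append h ψ) := by
  have hmp := volume_measurePreserving_fin_append e n
  have hemb : MeasurableEmbedding fun p : (Fin e → ℝ) × (Fin n → ℝ) ↦ Fin.append p.1 p.2 :=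
    (Fin.appendHomeomorph e n).measurableEmbedding
  rw [← hmp.integral_comp hemb]
  exact integral_prod_symm _ ((hmp.integrable_comp_emb hemb).2 hF)

theorem append_dotProduct_append (v h : Fin e → ℝ) (u ψ : Fin n → ℝ) :
    Fin.append v u ⬝ᵥ Fin.append h ψ = v ⬝ᵥ h + u ⬝ᵥ ψ := by
  simp [dotProduct, Fin.sum_univ_add]

/-- The Cayley configuration of the sets `S j`, which lifts each `S j` to the height given by the
`j`-th standard basis vector. -/
def cayleyConfiguration (S : Fin e → Set (Fin n → ℝ)) : Set (Fin (e + n) → ℝ) :=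
  ⋃ j, Fin.append (Pi.single j 1) '' S j

/-- The cone over the Cayley configuration of the sets `S j`. -/
def cayleyCone (S : Fin e → Set (Fin n → ℝ)) : PointedCone ℝ (Fin (e + n) → ℝ) :=
  PointedCone.hull ℝ (cayleyConfiguration S)

theorem append_single_mem_cayleyCone {j : Fin e} {x : Fin n → ℝ} (hx : x ∈ convexHull ℝ (S j)) :
    Fin.append (Pi.single j 1) x ∈ cayleyCone S := by
  refine convexHull_min (t := {x | Fin.append (Pi.single j 1) x ∈ cayleyCone S})
    (fun y hy ↦ ?_) (fun y hy z hz a b ha hb hab ↦ ?_) hx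
  · exact Submodule.subset_span (mem_iUnion.2 ⟨j, mem_image_of_mem _ hy⟩)
  · have happend : Fin.append (Pi.single j 1) (a • y + b • z) =
        a • Fin.append (Pi.single j 1) y + b • Fin.append (Pi.single j 1) z := by
      ext i
      refine Fin.addCases (fun k ↦ ?_) (fun k ↦ ?_) i
      · simp [← add_mul, hab]
      · simp
    rw [mem_ofPred_eq, happend]
    exact (cayleyCone S).convex hy hz ha hb hab

theorem append_mem_cayleyCone (hv : ∀ j, 0 ≤ v j) (hu : u ∈ ∑ j, v j • convexHull ℝ (S j)) :
    Fin.append v u ∈ cayleyCone S := by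
  obtain ⟨c, hc, rfl⟩ := (mem_fintype_sum _ _).1 hu
  choose x hx hxc using hc
  have hsum : Fin.append v (∑ j, c j) = ∑ j, v j • Fin.append (Pi.single j 1) (x j) := by
    ext i
    refine Fin.addCases (fun k ↦ ?_) (fun k ↦ ?_) i
    · simp [Pi.single_apply]
    · simp [← hxc]
  rw [hsum]
  exact sum_mem fun j _ ↦ (cayleyCone S).smul_mem (hv j) (append_single_mem_cayleyCone (hx j))

theorem append_mem_dualCone_cayleyCone_iff (hS : ∀ j, IsCompact (S j))
    (hne : ∀ j, (S j).Nonempty) {h : Fin e → ℝ} {ψ : Fin n → ℝ} :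
    Fin.append h ψ ∈ dualCone (cayleyCone S : Set (Fin (e + n) → ℝ)) ↔
      h ∈ Ici fun j ↦ -lowerSupport (S j) ψ := by
  have hdot (j : Fin e) (x : Fin n → ℝ) :
      Fin.append (Pi.single j 1) x ⬝ᵥ Fin.append h ψ = h j + x ⬝ᵥ ψ := by
    rw [append_dotProduct_append, single_one_dotProduct]
  rw [dualCone, cayleyCone, PointedCone.dual_hull, PointedCone.mem_dual, cayleyConfiguration]
  simp only [mem_Ici, Pi.le_def, neg_le, le_lowerSupport_iff (hS _) (hne _), neg_le_iff_add_nonneg',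
    ← hdot]
  exact ⟨fun H j x hx ↦ H (mem_iUnion.2 ⟨j, mem_image_of_mem _ hx⟩), fun H y hy ↦ by
    obtain ⟨j, x, hx, rfl⟩ := mem_iUnion.1 hy
    exact H j x hx⟩

theorem integral_append_indicator_dualCone_cayleyCone (hS : ∀ j, IsCompact (S j))
    (hne : ∀ j, (S j).Nonempty) (hv : ∀ j, 0 < v j) (u ψ : Fin n → ℝ) :
    ∫ h, (dualCone (cayleyCone S : Set (Fin (e + n) → ℝ)) : Set (Fin (e + n) → ℝ)).indicator
        (fun φ ↦ exp (-(Fin.append v u ⬝ᵥ φ))) (Fin.append h ψ) =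
      (∏ j, v j)⁻¹ * exp (-(u ⬝ᵥ ψ - lowerSupport (∑ j, v j • convexHull ℝ (S j)) ψ)) := by
  set b : Fin e → ℝ := fun j ↦ -lowerSupport (S j) ψ
  have hindicator (h : Fin e → ℝ) :
      (dualCone (cayleyCone S : Set (Fin (e + n) → ℝ)) : Set (Fin (e + n) → ℝ)).indicator
          (fun φ ↦ exp (-(Fin.append v u ⬝ᵥ φ))) (Fin.append h ψ) =
        exp (-(u ⬝ᵥ ψ)) * (Ici b).indicator (fun h ↦ exp (-(v ⬝ᵥ h))) h := by
    classical
    rw [indicator_apply, indicator_apply, SetLike.mem_coe,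
      append_mem_dualCone_cayleyCone_iff hS hne, append_dotProduct_append,
      neg_add_rev, exp_add, mul_ite, mul_zero]
    rfl
  have hb : lowerSupport (∑ j, v j • convexHull ℝ (S j)) ψ = -(v ⬝ᵥ b) := by
    rw [lowerSupport_sum_smul_convexHull hS hne (fun j ↦ (hv j).le), ← dotProduct_neg]
    simp [b, Pi.neg_def]
  simp only [hindicator]
  rw [integral_const_mul, integral_indicator measurableSet_Ici, integral_exp_neg_dotProduct_Ici hv,
    hb, mul_left_comm, ← exp_add, sub_neg_eq_add, neg_add]

theorem isCompact_sum_smul_convexHull (hS : ∀ j, (S j).Finite) (v : Fin e → ℝ) :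
    IsCompact (∑ j, v j • convexHull ℝ (S j)) :=
  Finset.sum_induction _ IsCompact (fun _ _ ↦ IsCompact.add) isCompact_singleton fun j _ ↦
    ((hS j).isCompact_convexHull ℝ).smul (v j)

theorem mem_hull_iUnion_image_iff {ι α E : Type*} [Fintype ι] [AddCommGroup E] [Module ℝ E]
    {f : ι → α → E} {A : ι → Finset α} {y : E} :
    y ∈ PointedCone.hull ℝ (⋃ j, f j '' A j) ↔
      ∃ t : ι → α → ℝ, (∀ j a, 0 ≤ t j a) ∧ y = ∑ j, ∑ a ∈ A j, t j a • f j a := by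
  have himage : ⋃ j, f j '' A j = (fun p : (_ : ι) × α ↦ f p.1 p.2) '' Finset.univ.sigma A := by
    ext z
    simp
  rw [himage, PointedCone.hull, Submodule.mem_span_image_finset_iff_exists_fun']
  constructor
  · rintro ⟨t, rfl⟩
    exact ⟨fun j a ↦ t ⟨j, a⟩, fun j a ↦ (t ⟨j, a⟩).2, Finset.sum_sigma _ _ _⟩
  · rintro ⟨t, ht, rfl⟩
    exact ⟨fun p ↦ ⟨t p.1 p.2, ht p.1 p.2⟩, Finset.sum_sigma _ _ _⟩

theorem stmt_11_general (hS : ∀ j, (S j).Finite) (hv : ∀ j, 0 < v j)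
    (hu : u ∈ ∑ j, v j • convexHull ℝ (S j)) {T : Finset (Matrix (Fin (e + n)) (Fin (e + n)) ℝ)}
    (hT : IsSimplicialDissection T (cayleyCone S))
    (hX : ∀ M ∈ T, ∀ k, (M⁻¹ *ᵥ Fin.append v u) k ≠ 0) :
    n.factorial * (volume (polarDual (∑ j, v j • convexHull ℝ (S j)) u)).toReal =
      (∏ j, v j) * ∑ M ∈ T, 1 / (|M.det| * ∏ k, (M⁻¹ *ᵥ Fin.append v u) k) := by
  have hne (j : Fin e) : (S j).Nonempty := by
    obtain ⟨_, hc, -⟩ := (mem_fintype_sum _ _).1 hu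
    exact convexHull_nonempty_iff.1 (smul_set_nonempty.1 ⟨_, hc j⟩)
  have hXC := append_mem_cayleyCone (fun j ↦ (hv j).le) hu
  have hP := isCompact_sum_smul_convexHull hS v
  have hcont := continuous_lowerSupport hP
  have hmeas := (isClosed_dualCone (cayleyCone S : Set (Fin (e + n) → ℝ))).measurableSet
  rw [← hT.integral_exp_neg_dotProduct_dualCone hXC hX, ← integral_indicator hmeas,
    integral_eq_integral_integral_append
      ((integrable_indicator_iff hmeas).2 (hT.integrableOn_exp_neg_dotProduct_dualCone hXC hX))]
  simp only [integral_append_indicator_dualCone_cayleyCone (fun j ↦ (hS j).isCompact) hne hv]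
  rw [integral_const_mul, mul_inv_cancel_left₀ (Finset.prod_ne_zero_iff.2 fun j _ ↦ (hv j).ne'),
    integral_eq_lintegral_of_nonneg_ae (Eventually.of_forall fun ψ ↦ (exp_pos _).le)
      (by fun_prop), lintegral_exp_lowerSupport hP hu, Fintype.card_fin, ENNReal.toReal_mul,
    ENNReal.toReal_natCast]

end Cayley

/-- Filliman-duality formula: for a triangulation `T` of the Cayley cone `Cone(Â)` into
simplicial cones with generators in `Â` (columns of matrices `A_σ`), if `u` is interior
to `P = Σ_j v_j·conv(A_j)` and `X = (v,u)` avoids all facet hyperplanes, then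
`n!·vol((P−u)^∘) = (v₁⋯v_e) Σ_{σ∈T} 1/(|det A_σ| ∏ᵢ (A_σ⁻¹X)ᵢ)`. -/
theorem stmt_11 (n e : ℕ) (A : Fin e → Finset (Fin n → ℤ)) (hA : ∀ j, (A j).Nonempty)
    (v : Fin e → ℝ) (hv : ∀ j, 0 < v j) (u : Fin n → ℝ)
    (P : Set (Fin n → ℝ))
    (hP : P = ∑ j, v j •
        convexHull ℝ ((fun ω : Fin n → ℤ => fun i => (ω i : ℝ)) '' ↑(A j)))
    (hPdim : (interior P).Nonempty)
    (cay : Fin e → (Fin n → ℤ) → (Fin (e + n) → ℝ))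
    (hcay : ∀ j ω, cay j ω = Fin.append (Pi.single j (1 : ℝ)) (fun i => (ω i : ℝ)))
    (Ahat : Set (Fin (e + n) → ℝ)) (hAhat : Ahat = ⋃ j, cay j '' ↑(A j))
    (ConeA : Set (Fin (e + n) → ℝ))
    (hConeA : ConeA = {y | ∃ t : Fin e → (Fin n → ℤ) → ℝ, (∀ j ω, 0 ≤ t j ω) ∧
        y = ∑ j, ∑ ω ∈ A j, t j ω • cay j ω})
    (T : Finset (Matrix (Fin (e + n)) (Fin (e + n)) ℝ))
    (hTcols : ∀ M ∈ T, ∀ k, (fun i => M i k) ∈ Ahat)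
    (hTindep : ∀ M ∈ T, M.det ≠ 0)
    (coneM : Matrix (Fin (e + n)) (Fin (e + n)) ℝ → Set (Fin (e + n) → ℝ))
    (hconeM : ∀ M, coneM M =
        {y | ∃ t : Fin (e + n) → ℝ, (∀ k, 0 ≤ t k) ∧ y = ∑ k, t k • fun i => M i k})
    (hcover : ConeA = ⋃ M ∈ T, coneM M)
    (hdisj : ∀ M ∈ T, ∀ M' ∈ T, M ≠ M' → volume (coneM M ∩ coneM M') = 0)
    (X : Fin (e + n) → ℝ) (hX : X = Fin.append v u)
    (hu : u ∈ interior P)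
    (hXT : ∀ M ∈ T, ∀ k, (M⁻¹ *ᵥ X) k ≠ 0)
    (Pdual : Set (Fin n → ℝ))
    (hPdual : Pdual = {ψ | ∀ p ∈ P, -1 ≤ ∑ i, ψ i * (p i - u i)}) :
    (n.factorial : ℝ) * (volume Pdual).toReal
      = (∏ j, v j) * ∑ M ∈ T, 1 / (|M.det| * ∏ k, (M⁻¹ *ᵥ X) k) := by
  let S (j : Fin e) : Set (Fin n → ℝ) := (fun ω i ↦ (ω i : ℝ)) '' (A j : Set (Fin n → ℤ))
  have hcayley : cayleyConfiguration S = ⋃ j, cay j '' A j := by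
    simp only [cayleyConfiguration, S, image_image, funext (hcay _)]
  have hcone : ConeA = cayleyCone S := by
    ext y
    rw [hConeA, SetLike.mem_coe, cayleyCone, hcayley, mem_hull_iUnion_image_iff, mem_ofPred_eq]
  have hcol (M : Matrix (Fin (e + n)) (Fin (e + n)) ℝ) :
      coneM M = (columnCone M : Set (Fin (e + n) → ℝ)) := by
    ext y
    rw [hconeM, SetLike.mem_coe, mem_columnCone_iff_exists]
    rfl
  simp only [hcone, hcol] at hcover hdisj
  subst hP hX hPdual
  exact stmt_11_general (fun j ↦ (A j).finite_toSet.image _) hv (interior_subset hu)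
    ⟨hTindep, hcover, fun M hM M' hM' ↦ hdisj M hM M' hM'⟩ hXT
end
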